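/- arXiv:2506.06933 — 5 statements merged into one kernel-verified Lean document; each statement's English description precedes it below -/
import Mathlib

section
/- Let c ≥ 1 be a real number and let C : [1,∞) → ℝ satisfy: (i) C(m) ≤ c + m/2 for all m ∈ [1, c+1]; and (ii) C(m) = (1/(c+1))·(C(m/(c+1)) + c) + (c/(c+1))·(C(c·m/(c+1)) + 1) for all m > c+1. Then C(m) ≤ 2c·⌈log_{c+1} m⌉ for all m > 1. -/
/-- **Cost Analysis of Asymmetric Search.**
If `c ≥ 1` and `C : ℝ → ℝ` satisfies the line-search base bound
`C m ≤ c + m / 2` on `[1, c+1]` and the asymmetric-search recurrence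
for `m > c + 1`, then `C m ≤ 2 c ⌈log_{c+1} m⌉` for all `m > 1`. -/
theorem asymmetric_search_cost
    (c : ℝ) (hc : 1 ≤ c) (C : ℝ → ℝ)
    (hbase : ∀ m : ℝ, 1 ≤ m → m ≤ c + 1 → C m ≤ c + m / 2)
    (hrec : ∀ m : ℝ, c + 1 < m →
      C m = (1 / (c + 1)) * (C (m / (c + 1)) + c)
          + (c / (c + 1)) * (C (c * m / (c + 1)) + 1)) :
    ∀ m : ℝ, 1 < m → C m ≤ 2 * c * (⌈Real.logb (c + 1) m⌉ : ℝ) := by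
  have hc0 : 0 < c := by linarith
  have h1 : 0 < c + 1 := by linarith
  have hone : 1 < c + 1 := by linarith
  have key : ∀ n : ℕ, ∀ m : ℝ, 1 < m → m ≤ (c + 1) * ((c + 1) / c) ^ n →
      C m ≤ 2 * c * (⌈Real.logb (c + 1) m⌉ : ℝ) := by
    have base : ∀ m : ℝ, 1 < m → m ≤ c + 1 →
        C m ≤ 2 * c * (⌈Real.logb (c + 1) m⌉ : ℝ) := by
      intro m hm hm2
      have hb := hbase m hm.le hm2
      have hp : 0 < Real.logb (c + 1) m := Real.logb_pos hone hm
      have hcl : (1 : ℤ) ≤ ⌈Real.logb (c + 1) m⌉ := Int.ceil_pos.mpr hp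
      have hcl' : (1 : ℝ) ≤ (⌈Real.logb (c + 1) m⌉ : ℝ) := by exact_mod_cast hcl
      nlinarith
    intro n
    induction n with
    | zero => intro m hm hm2; exact base m hm (by simpa using hm2)
    | succ n ih =>
      intro m hm hm2
      rcases le_or_gt m (c + 1) with h | h
      · exact base m hm h
      have hm0 : 0 < m := by linarith
      have hs : c * m / (c + 1) ≤ (c + 1) * ((c + 1) / c) ^ n := by
        rw [div_le_iff₀ h1]
        calc c * m ≤ c * ((c + 1) * ((c + 1) / c) ^ (n + 1)) := by gcongr
          _ = _ := by rw [pow_succ]; field_simp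
      have hle : m / (c + 1) ≤ c * m / (c + 1) := by
        gcongr; nlinarith
      have ha : 1 < m / (c + 1) := by rw [lt_div_iff₀ h1]; linarith
      have e1 := ih _ ha (hle.trans hs)
      have e2 := ih _ (ha.trans_le hle) hs
      have l1 : Real.logb (c + 1) (m / (c + 1)) = Real.logb (c + 1) m - 1 := by
        rw [Real.logb_div hm0.ne' h1.ne', Real.logb_self_eq_one hone]
      rw [l1, Int.ceil_sub_one] at e1
      push_cast at e1
      have l2 : ⌈Real.logb (c + 1) (c * m / (c + 1))⌉ ≤ ⌈Real.logb (c + 1) m⌉ := by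
        apply Int.ceil_le_ceil
        apply Real.logb_le_logb_of_le hone (by positivity)
        rw [div_le_iff₀ h1]; nlinarith
      have l2' : (⌈Real.logb (c + 1) (c * m / (c + 1))⌉ : ℝ) ≤ ⌈Real.logb (c + 1) m⌉ := by
        exact_mod_cast l2
      have e3 : C (c * m / (c + 1)) ≤ 2 * c * (⌈Real.logb (c + 1) m⌉ : ℝ) :=
        e2.trans (by gcongr)
      rw [hrec m h]
      generalize (⌈Real.logb (c + 1) m⌉ : ℝ) = K at *
      calc _ ≤ (1 / (c + 1)) * (2 * c * (K - 1) + c) + (c / (c + 1)) * (2 * c * K + 1) := by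
            gcongr
        _ = 2 * c * K := by field_simp; ring
  intro m hm
  have hr : 1 < (c + 1) / c := by rw [lt_div_iff₀ hc0]; linarith
  obtain ⟨n, hn⟩ := pow_unbounded_of_one_lt m hr
  refine key n m hm (hn.le.trans ?_)
  have : 0 < ((c + 1) / c) ^ n := by positivity
  nlinarith
end

section
/- Let d ≥ 2 be an integer, let g ∈ ℝ^d be a unit vector, let u be uniformly distributed on the unit sphere S^{d-1} ⊂ ℝ^d, let s ∈ [0,1], and let β ∈ [1/2, 1). Define the sampling weight function φ̂(u) = (1-β)·1{⟨g,u⟩ > -s} − β·1{⟨g,u⟩ ≤ -s}, where 1{·} is the indicator function. Then E[φ̂(u)·⟨g,u⟩] = Γ(d/2)·(1-s²)^{(d-1)/2} / (2√π·Γ((d+1)/2)); in particular this value does not depend on β. -/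
open MeasureTheory Metric Set Real
open scoped RealInnerProductSpace

/-- The uniform (normalized rotation-invariant) probability measure on the unit
sphere `S^{d-1} ⊂ ℝ^d`. -/
noncomputable def sphereUniform (d : ℕ) :
    Measure (sphere (0 : EuclideanSpace ℝ (Fin d)) 1) :=
  ((volume : Measure (EuclideanSpace ℝ (Fin d))).toSphere univ)⁻¹ •
    (volume : Measure (EuclideanSpace ℝ (Fin d))).toSphere


lemma polar_gen {E : Type*} [NormedAddCommGroup E] [InnerProductSpace ℝ E] [FiniteDimensional ℝ E]
    [MeasurableSpace E] [BorelSpace E] [Nontrivial E] (μ : Measure E) [μ.IsAddHaarMeasure]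
    (n : ℕ) (hdim : Module.finrank ℝ E = n + 1) (g : E) (h : ℝ → ℝ) :
    ∫ x : E, h (⟪g, x⟫ / ‖x‖) * ⟪g, x⟫ * exp (-‖x‖^2) ∂μ
      = (∫ u : sphere (0 : E) 1, h ⟪g, (u : E)⟫ * ⟪g, (u : E)⟫ ∂μ.toSphere)
        * (1/2 * Real.Gamma (((n:ℝ)+2)/2)) := by
  calc
    _ = ∫ x : ({(0)}ᶜ : Set E), h (⟪g, x.1⟫ / ‖x.1‖) * ⟪g, x.1⟫ * exp (-‖x.1‖^2) ∂(μ.comap (↑)) := by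
      rw [integral_subtype_comap (measurableSet_singleton _).compl
        fun x : E ↦ h (⟪g, x⟫ / ‖x‖) * ⟪g, x⟫ * exp (-‖x‖^2), restrict_compl_singleton]
    _ = ∫ p : sphere (0:E) 1 × Ioi (0:ℝ), (h ⟪g, p.1.1⟫ * ⟪g, p.1.1⟫) * (p.2.1 * exp (-p.2.1^2))
          ∂μ.toSphere.prod (.volumeIoiPow (Module.finrank ℝ E - 1)) := by
      rw [← μ.measurePreserving_homeomorphUnitSphereProd.integral_comp
        (Homeomorph.measurableEmbedding _)]
      refine integral_congr_ae (.of_forall fun x => ?_)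
      have hx : ‖x.1‖ ≠ 0 := norm_ne_zero_iff.mpr x.2
      simp only [homeomorphUnitSphereProd_apply_fst_coe, homeomorphUnitSphereProd_apply_snd_coe,
        inner_smul_right]
      rw [div_eq_inv_mul]
      field_simp
    _ = (∫ u : sphere (0:E) 1, h ⟪g, u.1⟫ * ⟪g, u.1⟫ ∂μ.toSphere) *
        ∫ r : Ioi (0:ℝ), r.1 * exp (-r.1^2) ∂.volumeIoiPow (Module.finrank ℝ E - 1) :=
      integral_prod_mul (fun u : sphere (0:E) 1 => h ⟪g, u.1⟫ * ⟪g, u.1⟫)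
        (fun r : Ioi (0:ℝ) => r.1 * exp (-r.1^2))
    _ = _ := by
      congr 1
      simp only [Measure.volumeIoiPow, ENNReal.ofReal]
      rw [integral_withDensity_eq_integral_smul (by fun_prop), hdim, Nat.add_sub_cancel,
        integral_subtype_comap measurableSet_Ioi
          fun a : ℝ ↦ Real.toNNReal (a ^ n) • (a * exp (-a^2))]
      have := integral_rpow_mul_exp_neg_rpow (p := 2) (q := (n:ℝ)+1) (by norm_num)
        (by have : (0:ℝ) ≤ n := by positivity
            linarith)
      rw [show (n:ℝ)+2 = n+1+1 by ring, ← this]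
      refine setIntegral_congr_fun measurableSet_Ioi fun x hx => ?_
      have hx : 0 < x := hx
      have h2 : x ^ ((n:ℝ)+1) = x^n * x := by
        rw [Real.rpow_add hx, Real.rpow_natCast, Real.rpow_one]
      simp only [NNReal.smul_def, Real.coe_toNNReal _ (pow_nonneg hx.le _), h2, smul_eq_mul,
        Real.rpow_two]
      ring

lemma polar_aux (n : ℕ) (g : EuclideanSpace ℝ (Fin (n+1))) (h : ℝ → ℝ) :
    ∫ x : EuclideanSpace ℝ (Fin (n+1)), h (⟪g, x⟫ / ‖x‖) * ⟪g, x⟫ * exp (-‖x‖^2)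
      = (∫ u : sphere (0 : EuclideanSpace ℝ (Fin (n+1))) 1,
          h ⟪g, (u : EuclideanSpace ℝ (Fin (n+1)))⟫ * ⟪g, (u : EuclideanSpace ℝ (Fin (n+1)))⟫
            ∂(volume : Measure (EuclideanSpace ℝ (Fin (n+1)))).toSphere)
        * (1/2 * Real.Gamma (((n:ℝ)+2)/2)) :=
  polar_gen volume n (by simp) g h

lemma area_aux (n : ℕ) :
    (volume : Measure (EuclideanSpace ℝ (Fin (n+1)))).toSphere.real univ
      = 2 * √π ^ (n+1) / Real.Gamma (((n:ℝ)+1)/2) := by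
  rw [Measure.toSphere_real_apply_univ, measureReal_def, EuclideanSpace.volume_ball]
  have h0 : (0:ℝ) < ((n:ℝ)+1)/2 := by positivity
  have hG := Real.Gamma_pos_of_pos h0
  have h := Real.Gamma_add_one h0.ne'
  simp [h]
  rw [ENNReal.toReal_ofReal (by positivity)]
  field_simp

lemma exists_param (n : ℕ) (g : EuclideanSpace ℝ (Fin (n+1))) (hg : ‖g‖ = 1) :
    ∃ φ : ℝ × (Fin n → ℝ) ≃ᵐ EuclideanSpace ℝ (Fin (n+1)), MeasurePreserving φ ∧
      (∀ p, ⟪g, φ p⟫ = p.1) ∧ ∀ p, ‖φ p‖^2 = p.1^2 + ∑ i, p.2 i ^ 2 := by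
  obtain ⟨b, hb⟩ := Orthonormal.exists_orthonormalBasis_extension_of_card_eq (𝕜 := ℝ)
    (E := EuclideanSpace ℝ (Fin (n+1))) (ι := Fin (n+1)) (by simp) (v := fun _ => g) (s := {0})
    (by
      constructor
      · intro i; simpa using hg
      · intro i j hij
        exact absurd (Subsingleton.elim i j) hij)
  have hb0 : b 0 = g := hb 0 rfl
  refine ⟨((MeasurableEquiv.piFinSuccAbove (fun _ => ℝ) 0).symm.trans
    (MeasurableEquiv.toLp 2 (Fin (n+1) → ℝ))).trans b.measurableEquiv.symm, ?_, ?_, ?_⟩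
  · exact (b.measurePreserving_measurableEquiv.symm).comp
      ((PiLp.volume_preserving_toLp (Fin (n+1))).comp
        (volume_preserving_piFinSuccAbove (fun _ => ℝ) 0).symm)
  · intro p
    rw [← hb0, ← b.repr_apply_apply]
    change (b.repr (b.repr.symm _)) 0 = _
    rw [LinearIsometryEquiv.apply_symm_apply]
    simp [MeasurableEquiv.piFinSuccAbove]
  · intro p
    change ‖b.repr.symm _‖^2 = _
    rw [LinearIsometryEquiv.norm_map, EuclideanSpace.norm_sq_eq, Fin.sum_univ_succ]
    simp [MeasurableEquiv.piFinSuccAbove]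

lemma tendsto_aux_top : Filter.Tendsto (fun t : ℝ => -(1/2) * exp (-t^2)) Filter.atTop (nhds 0) := by
  have : Filter.Tendsto (fun t : ℝ => exp (-t^2)) Filter.atTop (nhds 0) :=
    Real.tendsto_exp_neg_atTop_nhds_zero.comp (Filter.tendsto_pow_atTop two_ne_zero)
  have h := this.const_mul (-(1/2))
  rwa [mul_zero] at h

lemma tendsto_aux_bot : Filter.Tendsto (fun t : ℝ => -(1/2) * exp (-t^2)) Filter.atBot (nhds 0) := by
  simpa [Function.comp_def] using tendsto_aux_top.comp Filter.tendsto_neg_atBot_atTop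

lemma deriv_aux (t : ℝ) : HasDerivAt (fun t : ℝ => -(1/2) * exp (-t^2)) (t * exp (-t^2)) t := by
  have := (((hasDerivAt_pow 2 t).neg).exp).const_mul (-(1/2))
  refine HasDerivAt.congr_deriv (f := fun t : ℝ => -(1/2) * exp (-t^2)) this ?_
  change -(1/2) * (exp (-t^2) * -(((2:ℕ):ℝ) * t ^ (2 - 1))) = _
  norm_num
  ring

lemma integrable_aux : Integrable (fun t : ℝ => t * exp (-t^2)) := by
  simpa using integrable_mul_exp_neg_mul_sq (b := 1) one_pos

lemma int_line : ∫ t : ℝ, t * exp (-t^2) = 0 := by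
  rw [integral_of_hasDerivAt_of_tendsto deriv_aux integrable_aux tendsto_aux_bot tendsto_aux_top]
  simp

lemma int_Iic (a : ℝ) : ∫ t in Iic a, t * exp (-t^2) = -(1/2) * exp (-a^2) := by
  rw [integral_Iic_of_hasDerivAt_of_tendsto' (fun x _ => deriv_aux x) integrable_aux.integrableOn
    tendsto_aux_bot]
  simp

/-- the weight -/
noncomputable def wgt (s β t : ℝ) : ℝ :=
  (if -s < t then (1 - β) else 0) - (if t ≤ -s then β else 0)

lemma wgt_eq (s β t : ℝ) : wgt s β t = (1 - β) - (if t ≤ -s then 1 else 0) := by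
  unfold wgt
  by_cases h : t ≤ -s
  · simp [h, not_lt.mpr h]
  · simp [h, not_le.mp h]

lemma wgt_meas (s β : ℝ) : Measurable (wgt s β) := by
  unfold wgt
  refine Measurable.sub ?_ ?_
  · exact Measurable.ite measurableSet_Ioi measurable_const measurable_const
  · exact Measurable.ite measurableSet_Iic measurable_const measurable_const

lemma cond_iff (s : ℝ) (hs0 : 0 ≤ s) (hs1 : s < 1) (Q : ℝ) (hQ : 0 < Q) (t : ℝ) :
    t / √(t^2+Q) ≤ -s ↔ t ≤ -(s * √Q / √(1-s^2)) := by
  have hk : 0 < 1 - s^2 := by nlinarith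
  set k := √(1-s^2) with hkdef
  have hk0 : 0 < k := Real.sqrt_pos.mpr hk
  have hk2 : k^2 = 1 - s^2 := Real.sq_sqrt hk.le
  set w := √(t^2+Q) with hw
  have hw0 : 0 < w := Real.sqrt_pos.mpr (by positivity)
  have hw2 : w^2 = t^2+Q := Real.sq_sqrt (by positivity)
  set q := √Q
  have hq0 : 0 < q := Real.sqrt_pos.mpr hQ
  have hq2 : q^2 = Q := Real.sq_sqrt hQ.le
  rw [div_le_iff₀ hw0, le_neg, div_le_iff₀ hk0]
  have key : (s*w)^2 ≤ t^2 ↔ (s*q)^2 ≤ (t*k)^2 := by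
    rw [mul_pow, mul_pow, mul_pow, hw2, hq2, hk2]
    constructor <;> intro h <;> nlinarith
  have hsw : 0 ≤ s*w := by positivity
  have hsq : 0 ≤ s*q := by positivity
  constructor
  · intro h
    have ht : t ≤ 0 := by linarith
    have : (s*w)^2 ≤ t^2 := by nlinarith
    have := key.1 this
    have h3 : 0 ≤ -t*k := mul_nonneg (by linarith) hk0.le
    exact (pow_le_pow_iff_left₀ hsq h3 two_ne_zero).1 (by simpa [neg_mul] using this)
  · intro h
    have ht : 0 ≤ -t := by
      by_contra hc
      push Not at hc
      nlinarith
    have : (s*q)^2 ≤ (t*k)^2 := by nlinarith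
    have := key.2 this
    have := (pow_le_pow_iff_left₀ hsw ht two_ne_zero).1 (by simpa using this)
    linarith

lemma inner_int (s : ℝ) (hs0 : 0 ≤ s) (hs1 : s < 1) (β Q : ℝ) (hQ : 0 < Q) :
    ∫ t : ℝ, wgt s β (t / √(t^2+Q)) * t * exp (-(t^2+Q)) = 1/2 * exp (-(1/(1-s^2)) * Q) := by
  have hk : 0 < 1 - s^2 := by nlinarith
  have e : ∀ t : ℝ, wgt s β (t / √(t^2+Q)) * t * exp (-(t^2+Q))
      = exp (-Q) * ((1-β) * (t * exp (-t^2))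
        - (Iic (-(s * √Q / √(1-s^2)))).indicator (fun t => t * exp (-t^2)) t) := by
    intro t
    rw [wgt_eq, neg_add, Real.exp_add, indicator_apply]
    simp only [cond_iff s hs0 hs1 Q hQ t, mem_Iic]
    split_ifs <;> ring
  simp_rw [e]
  rw [integral_const_mul, integral_sub (integrable_aux.const_mul _)
    (integrable_aux.indicator measurableSet_Iic), integral_const_mul, int_line,
    integral_indicator measurableSet_Iic, int_Iic]
  have : -(1/(1-s^2)) * Q = -Q + -(-(s * √Q / √(1-s^2)))^2 := by
    rw [neg_sq, div_pow, mul_pow, Real.sq_sqrt hQ.le, Real.sq_sqrt hk.le]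
    field_simp
    ring
  rw [this, Real.exp_add]
  ring

lemma inner_int_one (β Q : ℝ) (hQ : 0 < Q) :
    ∫ t : ℝ, wgt 1 β (t / √(t^2+Q)) * t * exp (-(t^2+Q)) = 0 := by
  have e : ∀ t : ℝ, wgt 1 β (t / √(t^2+Q)) * t * exp (-(t^2+Q))
      = exp (-Q) * ((1-β) * (t * exp (-t^2))) := by
    intro t
    have hw0 : 0 < √(t^2+Q) := Real.sqrt_pos.mpr (by positivity)
    have hw2 : √(t^2+Q)^2 = t^2+Q := Real.sq_sqrt (by positivity)
    have : ¬ (t / √(t^2+Q) ≤ -1) := by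
      rw [div_le_iff₀ hw0]
      intro h
      nlinarith
    rw [wgt_eq, neg_add, Real.exp_add, if_neg this]
    ring
  simp_rw [e]
  rw [integral_const_mul, integral_const_mul, int_line]
  ring

lemma exp_sum_aux (n : ℕ) (b : ℝ) (y : Fin n → ℝ) :
    exp (-b * ∑ i, y i ^ 2) = ∏ i, exp (-b * y i ^ 2) := by
  rw [Finset.mul_sum, Real.exp_sum]

lemma gauss_pi (n : ℕ) (b : ℝ) :
    ∫ y : Fin n → ℝ, exp (-b * ∑ i, y i ^ 2) = √(π / b) ^ n := by
  simp_rw [exp_sum_aux]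
  rw [integral_fintype_prod_volume_eq_pow (fun x : ℝ => exp (-b * x^2)), integral_gaussian]
  simp

lemma gauss_integrable (n : ℕ) (s β : ℝ) :
    Integrable (fun p : ℝ × (Fin n → ℝ) =>
      wgt s β (p.1 / √(p.1^2 + ∑ i, p.2 i ^ 2)) * p.1 * exp (-(p.1^2 + ∑ i, p.2 i ^ 2))) := by
  have h1 : Integrable (fun y : Fin n → ℝ => exp (-1 * ∑ i, y i ^ 2)) := by
    simp_rw [exp_sum_aux]
    exact Integrable.fintype_prod (f := fun _ (x : ℝ) => exp (-1 * x^2))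
      (fun _ => integrable_exp_neg_mul_sq one_pos)
  have h2 := integrable_aux.mul_prod h1
  have hm : Measurable (fun p : ℝ × (Fin n → ℝ) => wgt s β (p.1 / √(p.1^2 + ∑ i, p.2 i ^ 2))) :=
    (wgt_meas s β).comp (by fun_prop)
  have h3 := h2.bdd_mul (c := |1-β| + 1) hm.aestronglyMeasurable (.of_forall fun p => by
    rw [wgt_eq, Real.norm_eq_abs]
    refine (abs_sub _ _).trans ?_
    gcongr
    split_ifs <;> simp)
  refine h3.congr (.of_forall fun p => ?_)
  simp only [neg_add, Real.exp_add, neg_mul, one_mul]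
  ring

lemma ae_pos (n : ℕ) (hn : 1 ≤ n) : ∀ᵐ y : Fin n → ℝ, 0 < ∑ i, y i ^ 2 := by
  have : Nonempty (Fin n) := ⟨⟨0, hn⟩⟩
  have : ∀ᵐ y : Fin n → ℝ, y ≠ 0 := by
    rw [ae_iff]; simp
  filter_upwards [this] with y hy
  obtain ⟨i, hi⟩ := Function.ne_iff.1 hy
  exact Finset.sum_pos' (fun _ _ => sq_nonneg _) ⟨i, Finset.mem_univ _, by
    have : y i ≠ 0 := hi
    positivity⟩

lemma gauss_total (n : ℕ) (hn : 1 ≤ n) (s : ℝ) (hs : s ∈ Set.Icc (0 : ℝ) 1) (β : ℝ) :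
    ∫ p : ℝ × (Fin n → ℝ),
      wgt s β (p.1 / √(p.1^2 + ∑ i, p.2 i ^ 2)) * p.1 * exp (-(p.1^2 + ∑ i, p.2 i ^ 2))
      = 1/2 * √π ^ n * (1-s^2)^((n:ℝ)/2) := by
  have hI := gauss_integrable n s β
  rw [Measure.volume_eq_prod] at hI ⊢
  rw [integral_prod_symm _ hI]
  have hn' : (0:ℝ) < n := by exact_mod_cast hn
  rcases hs.2.lt_or_eq with h1 | h1
  · have hk : 0 < 1 - s^2 := by nlinarith [hs.1]
    calc _ = ∫ y : Fin n → ℝ, 1/2 * exp (-(1/(1-s^2)) * ∑ i, y i ^ 2) := by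
          refine integral_congr_ae ?_
          filter_upwards [ae_pos n hn] with y hy
          exact inner_int s hs.1 h1 β _ hy
      _ = _ := by
          rw [integral_const_mul, gauss_pi]
          have : π / (1/(1-s^2)) = π * (1-s^2) := by field_simp
          rw [this, Real.sqrt_mul Real.pi_pos.le, mul_pow, mul_assoc]
          congr 2
          rw [Real.sqrt_eq_rpow (1-s^2), ← Real.rpow_natCast, ← Real.rpow_mul hk.le]
          congr 1; ring
  · subst h1
    calc _ = ∫ y : Fin n → ℝ, (0:ℝ) := by
          refine integral_congr_ae ?_
          filter_upwards [ae_pos n hn] with y hy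
          exact inner_int_one β _ hy
      _ = _ := by
          rw [one_pow, sub_self, Real.zero_rpow (by positivity)]
          simp

theorem agrest_expectation
    (d : ℕ) (hd : 2 ≤ d) (g : EuclideanSpace ℝ (Fin d)) (hg : ‖g‖ = 1)
    (s : ℝ) (hs : s ∈ Set.Icc (0 : ℝ) 1) (β : ℝ) (hβ : β ∈ Set.Ico (1/2 : ℝ) 1) :
    (∫ u : (sphere (0 : EuclideanSpace ℝ (Fin d)) 1),
        ((if -s < ⟪g, (u : EuclideanSpace ℝ (Fin d))⟫ then (1 - β) else 0)
          - (if ⟪g, (u : EuclideanSpace ℝ (Fin d))⟫ ≤ -s then β else 0))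
          * ⟪g, (u : EuclideanSpace ℝ (Fin d))⟫ ∂(sphereUniform d))
      = Real.Gamma ((d : ℝ) / 2) * (1 - s ^ 2) ^ (((d : ℝ) - 1) / 2)
        / (2 * Real.sqrt π * Real.Gamma (((d : ℝ) + 1) / 2)) := by
  obtain ⟨n, rfl⟩ : ∃ n, d = n + 1 := ⟨d - 1, by omega⟩
  have hn : 1 ≤ n := by omega
  obtain ⟨φ, hφ, hφ1, hφ2⟩ := exists_param n g hg
  have hpol := polar_aux n g (wgt s β)
  rw [← hφ.integral_comp'] at hpol
  have hnorm : ∀ p, ‖φ p‖ = √(p.1^2 + ∑ i, p.2 i ^ 2) := fun p => by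
    rw [← hφ2, Real.sqrt_sq (norm_nonneg _)]
  simp_rw [hφ2, hφ1, hnorm] at hpol
  rw [gauss_total n hn s hs β] at hpol
  have harea := area_aux n
  have hG1 : 0 < Real.Gamma (((n:ℝ)+1)/2) := Real.Gamma_pos_of_pos (by positivity)
  have hG2 : 0 < Real.Gamma (((n:ℝ)+2)/2) := Real.Gamma_pos_of_pos (by positivity)
  have hpi : 0 < √π := Real.sqrt_pos.mpr Real.pi_pos
  rw [sphereUniform, integral_smul_measure, ENNReal.toReal_inv, ← measureReal_def, harea,
    smul_eq_mul]
  change _ * (∫ u : sphere (0 : EuclideanSpace ℝ (Fin (n+1))) 1,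
          wgt s β ⟪g, (u : EuclideanSpace ℝ (Fin (n+1)))⟫ * ⟪g, (u : EuclideanSpace ℝ (Fin (n+1)))⟫
            ∂(volume : Measure (EuclideanSpace ℝ (Fin (n+1)))).toSphere) = _
  set J := ∫ u : sphere (0 : EuclideanSpace ℝ (Fin (n+1))) 1,
          wgt s β ⟪g, (u : EuclideanSpace ℝ (Fin (n+1)))⟫ * ⟪g, (u : EuclideanSpace ℝ (Fin (n+1)))⟫
            ∂(volume : Measure (EuclideanSpace ℝ (Fin (n+1)))).toSphere
  have hJ : J = √π ^ n * (1-s^2)^((n:ℝ)/2) / Real.Gamma (((n:ℝ)+2)/2) := by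
    rw [eq_div_iff hG2.ne']
    linarith
  rw [hJ]
  push_cast
  rw [show (n:ℝ)+1-1 = n by ring, show (n:ℝ)+1+1 = n+2 by ring, pow_succ]
  field_simp
end

section
/- Let d ≥ 2 be an integer, let g ∈ ℝ^d be a unit vector, let u be uniformly distributed on the unit sphere S^{d-1} ⊂ ℝ^d, and let s ∈ [0,1]. Then E[⟨g,u⟩·1{⟨g,u⟩ ≥ -s}] = Γ(d/2)·(1-s²)^{(d-1)/2} / (2√π·Γ((d+1)/2)) and E[⟨g,u⟩·1{⟨g,u⟩ ≤ -s}] = −Γ(d/2)·(1-s²)^{(d-1)/2} / (2√π·Γ((d+1)/2)). -/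
open MeasureTheory Metric Set Real
open scoped RealInnerProductSpace

lemma cap_polar {d : ℕ} (hd : 1 ≤ d) (G : EuclideanSpace ℝ (Fin d) → ℝ)
    (f : sphere (0 : EuclideanSpace ℝ (Fin d)) 1 → ℝ) (k : ℝ → ℝ)
    (h : ∀ (u : sphere (0 : EuclideanSpace ℝ (Fin d)) 1) (r : ℝ), 0 < r →
      G (r • (u : EuclideanSpace ℝ (Fin d))) = f u * k r) :
    ∫ x, G x = (∫ u, f u ∂(volume : Measure (EuclideanSpace ℝ (Fin d))).toSphere) *
      ∫ y in Ioi (0 : ℝ), y ^ (d - 1) * k y := by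
  have : Nonempty (Fin d) := ⟨⟨0, hd⟩⟩
  set μ := (volume : Measure (EuclideanSpace ℝ (Fin d))) with hμ
  calc
    ∫ x, G x ∂μ = ∫ x : ({(0)}ᶜ : Set (EuclideanSpace ℝ (Fin d))), G x.1 ∂(μ.comap (↑)) := by
      rw [integral_subtype_comap (measurableSet_singleton _).compl fun x ↦ G x,
        restrict_compl_singleton]
    _ = ∫ x, f x.1 * k x.2 ∂μ.toSphere.prod (.volumeIoiPow (Module.finrank ℝ (EuclideanSpace ℝ (Fin d)) - 1)) := by
      rw [← μ.measurePreserving_homeomorphUnitSphereProd.integral_comp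
        (Homeomorph.measurableEmbedding _) (fun x => f x.1 * k x.2)]
      refine integral_congr_ae (.of_forall fun x => ?_)
      beta_reduce
      rw [← h _ _ (homeomorphUnitSphereProd _ x).2.2]
      congr 1
      have := congrArg Subtype.val ((homeomorphUnitSphereProd (EuclideanSpace ℝ (Fin d))).symm_apply_apply x)
      rw [homeomorphUnitSphereProd_symm_apply_coe] at this
      exact this.symm
    _ = (∫ u, f u ∂μ.toSphere) * ∫ x : Ioi (0 : ℝ), k x ∂.volumeIoiPow (Module.finrank ℝ (EuclideanSpace ℝ (Fin d)) - 1) :=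
      integral_prod_mul f (fun x : Ioi (0:ℝ) => k x)
    _ = _ := by
      simp only [Measure.volumeIoiPow, ENNReal.ofReal]
      rw [integral_withDensity_eq_integral_smul,
        integral_subtype_comap measurableSet_Ioi fun a ↦ Real.toNNReal (a ^ (Module.finrank ℝ (EuclideanSpace ℝ (Fin d)) - 1)) • k a,
        setIntegral_congr_fun measurableSet_Ioi fun x hx ↦ ?_]
      · rw [NNReal.smul_def, Real.coe_toNNReal _ (pow_nonneg hx.out.le _)]
        simp
      · exact (measurable_subtype_coe.pow_const _).real_toNNReal

lemma cap_split {n : ℕ} (g : EuclideanSpace ℝ (Fin (n + 1))) (hg : ‖g‖ = 1) (F : ℝ → ℝ → ℝ) :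
    ∫ x : EuclideanSpace ℝ (Fin (n + 1)), F ⟪g, x⟫ ‖x‖ =
      ∫ p : ℝ × EuclideanSpace ℝ (Fin n), F p.1 (√(p.1 ^ 2 + ‖p.2‖ ^ 2)) := by
  let W := WithLp 2 (ℝ × EuclideanSpace ℝ (Fin n))
  have hfr : Module.finrank ℝ W = Module.finrank ℝ (EuclideanSpace ℝ (Fin (n + 1))) := by
    have : Module.finrank ℝ W = Module.finrank ℝ (ℝ × EuclideanSpace ℝ (Fin n)) :=
      (WithLp.linearEquiv 2 ℝ (ℝ × EuclideanSpace ℝ (Fin n))).finrank_eq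
    rw [this]; simp [add_comm]
  let φ : W ≃ₗᵢ[ℝ] EuclideanSpace ℝ (Fin (n + 1)) := ((stdOrthonormalBasis ℝ W).reindex (finCongr (hfr.trans finrank_euclideanSpace_fin))).repr
  let e : W := WithLp.toLp 2 (1, 0)
  have he : ‖e‖ = 1 := by
    rw [WithLp.prod_norm_eq_of_L2]; simp [e]
  have hv : ‖φ e‖ = ‖g‖ := by rw [φ.norm_map, he, hg]
  let ψ := φ.trans ((ℝ ∙ (φ e - g))ᗮ.reflection)
  have hψ : ψ e = g := Submodule.reflection_sub hv
  have hmp : MeasurePreserving (fun p : ℝ × EuclideanSpace ℝ (Fin n) => ψ (WithLp.toLp 2 p)) :=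
    ψ.measurePreserving.comp (WithLp.volume_preserving_toLp ℝ (EuclideanSpace ℝ (Fin n)))
  have hme : MeasurableEmbedding (fun p : ℝ × EuclideanSpace ℝ (Fin n) => ψ (WithLp.toLp 2 p)) :=
    ψ.toHomeomorph.measurableEmbedding.comp (MeasurableEquiv.toLp 2 (ℝ × EuclideanSpace ℝ (Fin n))).measurableEmbedding
  rw [← hmp.integral_comp hme]
  refine integral_congr_ae (.of_forall fun p => ?_)
  beta_reduce
  congr 1
  · nth_rw 1 [← hψ]
    rw [ψ.inner_map_map, WithLp.prod_inner_apply]; simp [e]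
  · rw [ψ.norm_map, WithLp.prod_norm_eq_of_L2]; simp

lemma cap_tail (a : ℝ) : ∫ t in Ici a, t * rexp (-t ^ 2) = rexp (-a ^ 2) / 2 := by
  rw [integral_Ici_eq_integral_Ioi]
  have := integral_Ioi_of_hasDerivAt_of_tendsto' (a := a) (f := fun t => -(rexp (-t ^ 2) / 2))
    (f' := fun t => t * rexp (-t ^ 2)) (m := 0) ?_ ?_ ?_
  · rw [this]; ring
  · intro x _
    have := (((hasDerivAt_pow 2 x).neg.exp).div_const 2).neg
    convert! this using 1
    simp; ring
  · have := (integrable_mul_exp_neg_mul_sq one_pos).integrableOn (s := Ioi a)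
    simpa using this
  · have h1 : Filter.Tendsto (fun t : ℝ => t ^ 2) Filter.atTop Filter.atTop := Filter.tendsto_pow_atTop two_ne_zero
    have := ((Real.tendsto_exp_neg_atTop_nhds_zero.comp h1).div_const 2).neg
    simpa [Function.comp_def] using this

lemma cap_full : ∫ t : ℝ, t * rexp (-t ^ 2) = 0 := by
  have := integral_neg_eq_self (fun t : ℝ => t * rexp (-t ^ 2)) volume
  simp only [neg_mul, neg_sq, integral_neg] at this
  linarith

lemma cap_iff {s t q : ℝ} (hs : s ^ 2 < 1) (hq : 0 ≤ q) :
    -s * √(t ^ 2 + q ^ 2) ≤ t ↔ -s * q / √(1 - s ^ 2) ≤ t := by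
  have hr := Real.sqrt_nonneg (t ^ 2 + q ^ 2)
  have hr2 := Real.sq_sqrt (show 0 ≤ t ^ 2 + q ^ 2 by positivity)
  have hw : 0 < √(1 - s ^ 2) := Real.sqrt_pos.2 (by linarith)
  have hw2 := Real.sq_sqrt (show 0 ≤ 1 - s ^ 2 by linarith)
  rw [div_le_iff₀ hw]
  set r := √(t ^ 2 + q ^ 2)
  set w := √(1 - s ^ 2)
  have key : (s * r) ^ 2 - t ^ 2 = (s * q) ^ 2 - (t * w) ^ 2 := by
    rw [mul_pow, mul_pow, mul_pow, hr2, hw2]; ring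
  rcases le_or_gt 0 s with h | h <;> rcases le_or_gt 0 t with h' | h'
  · have h1 : 0 ≤ s * r := by positivity
    have h2 : 0 ≤ s * q := by positivity
    have h3 : 0 ≤ t * w := by positivity
    constructor <;> intro <;> linarith
  · have h1 : 0 ≤ s * r := by positivity
    have h2 : 0 ≤ s * q := by positivity
    have h3 : 0 ≤ -t * w := mul_nonneg (by linarith) hw.le
    have e1 : -s * r ≤ t ↔ (-t) ^ 2 ≤ (s * r) ^ 2 := by
      rw [sq_le_sq₀ (by linarith) h1]; constructor <;> intro <;> linarith
    have e2 : -s * q ≤ t * w ↔ (-t * w) ^ 2 ≤ (s * q) ^ 2 := by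
      rw [sq_le_sq₀ h3 h2]; constructor <;> intro <;> linarith
    rw [e1, e2]; constructor <;> intro <;> linarith
  · have h1 : 0 ≤ -s * r := mul_nonneg (by linarith) hr
    have h2 : 0 ≤ -s * q := mul_nonneg (by linarith) hq
    have h3 : 0 ≤ t * w := by positivity
    rw [← sq_le_sq₀ h1 h', ← sq_le_sq₀ h2 h3]; constructor <;> intro <;> linarith
  · have h1 : 0 ≤ -s * r := mul_nonneg (by linarith) hr
    have h2 : 0 ≤ -s * q := mul_nonneg (by linarith) hq
    have h3 : t * w < 0 := mul_neg_of_neg_of_pos h' hw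
    constructor <;> intro <;> linarith

noncomputable def capF (s t r : ℝ) : ℝ := t * (if -s * r ≤ t then 1 else 0) * rexp (-r ^ 2)

lemma capF_eq (s t q : ℝ) : capF s t (√(t ^ 2 + q ^ 2)) =
    rexp (-q ^ 2) * ((if -s * √(t ^ 2 + q ^ 2) ≤ t then 1 else 0) * (t * rexp (-t ^ 2))) := by
  rw [capF, Real.sq_sqrt (by positivity), neg_add, Real.exp_add]; ring

lemma cap_inner {s q : ℝ} (hs : s ^ 2 < 1) (hq : 0 ≤ q) :
    ∫ t, capF s t (√(t ^ 2 + q ^ 2)) = rexp (-(1 / (1 - s ^ 2)) * q ^ 2) / 2 := by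
  have hw : 0 < 1 - s ^ 2 := by linarith
  have : ∀ t, capF s t (√(t ^ 2 + q ^ 2)) =
      rexp (-q ^ 2) * (Ici (-s * q / √(1 - s ^ 2))).indicator (fun t => t * rexp (-t ^ 2)) t := by
    intro t
    rw [capF_eq]
    simp only [cap_iff hs hq, indicator, mem_Ici]
    split_ifs <;> simp
  simp_rw [this]
  rw [integral_const_mul, integral_indicator measurableSet_Ici, cap_tail, mul_div_assoc',
    ← Real.exp_add, div_pow, Real.sq_sqrt hw.le]
  congr 2
  field_simp
  ring

lemma cap_inner_one {s q : ℝ} (hs : s ^ 2 = 1) (hq : 0 < q) :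
    ∫ t, capF s t (√(t ^ 2 + q ^ 2)) = 0 := by
  have hlt : ∀ t, |t| < √(t ^ 2 + q ^ 2) := fun t =>
    Real.lt_sqrt_of_sq_lt (by rw [sq_abs]; nlinarith)
  simp_rw [capF_eq]
  rw [integral_const_mul]
  rcases (show s = 1 ∨ s = -1 from by simpa using hs) with h | h
  · subst h
    have : ∀ t, -1 * √(t ^ 2 + q ^ 2) ≤ t := fun t => by
      linarith [hlt t, neg_abs_le t]
    simp only [this, if_true, one_mul, cap_full, mul_zero]
  · subst h
    have : ∀ t, ¬ (- -1 * √(t ^ 2 + q ^ 2) ≤ t) := fun t => by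
      linarith [hlt t, le_abs_self t]
    simp only [this, if_false]
    simp

lemma cap_integrable (n : ℕ) (s : ℝ) :
    Integrable (fun p : ℝ × EuclideanSpace ℝ (Fin n) => capF s p.1 (√(p.1 ^ 2 + ‖p.2‖ ^ 2))) := by
  have h1 : Integrable (fun t : ℝ => t * rexp (-t ^ 2)) := by
    simpa using integrable_mul_exp_neg_mul_sq one_pos
  have h2 : Integrable (fun y : EuclideanSpace ℝ (Fin n) => rexp (-‖y‖ ^ 2)) := by
    by_contra h
    have := GaussianFourier.integral_rexp_neg_mul_sq_norm (V := EuclideanSpace ℝ (Fin n)) one_pos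
    simp only [neg_mul, one_mul] at this
    rw [integral_undef h] at this
    have : 0 < (π / 1) ^ ((Module.finrank ℝ (EuclideanSpace ℝ (Fin n))) / 2 : ℝ) := by positivity
    linarith
  refine (h1.mul_prod h2).mono ?_ (.of_forall fun p => ?_)
  · unfold capF
    refine Measurable.aestronglyMeasurable ?_
    refine (measurable_fst.mul (Measurable.ite ?_ measurable_const measurable_const)).mul (by fun_prop)
    exact measurableSet_le (by fun_prop) (by fun_prop)
  · rw [capF_eq, norm_mul, norm_mul, norm_mul _ (rexp (-‖p.2‖ ^ 2)), mul_comm]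
    gcongr
    split_ifs
    · simp
    · simp only [norm_zero, zero_mul]; positivity

lemma cap_gauss {n : ℕ} (hn : 1 ≤ n) (g : EuclideanSpace ℝ (Fin (n + 1))) (hg : ‖g‖ = 1) {s : ℝ}
    (hs : s ^ 2 ≤ 1) :
    ∫ x : EuclideanSpace ℝ (Fin (n + 1)), capF s ⟪g, x⟫ ‖x‖ =
      (π * (1 - s ^ 2)) ^ ((n : ℝ) / 2) / 2 := by
  rw [cap_split g hg, Measure.volume_eq_prod, integral_prod_symm _ (cap_integrable n s)]
  have : Nonempty (Fin n) := ⟨⟨0, hn⟩⟩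
  rcases hs.lt_or_eq with h | h
  · simp_rw [cap_inner h (norm_nonneg _)]
    rw [integral_div, GaussianFourier.integral_rexp_neg_mul_sq_norm (by
      have : 0 < 1 - s ^ 2 := by linarith
      positivity)]
    simp
  · rw [h, integral_eq_zero_of_ae]
    · rw [sub_self, mul_zero, Real.zero_rpow (by positivity), zero_div]
    · filter_upwards [Measure.ae_ne volume (0 : EuclideanSpace ℝ (Fin n))] with y hy
      exact cap_inner_one h (norm_pos_iff.2 hy)

lemma cap_radial (m : ℕ) : ∫ y in Ioi (0 : ℝ), y ^ m * rexp (-y ^ 2) =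
    Real.Gamma (((m : ℝ) + 1) / 2) / 2 := by
  have := integral_rpow_mul_exp_neg_rpow (p := 2) (q := m) (by norm_num)
    (by have : (0 : ℝ) ≤ m := by positivity
        linarith)
  simp only [Real.rpow_natCast, Real.rpow_two] at this
  rw [this]; ring

lemma cap_total (n : ℕ) :
    (volume : Measure (EuclideanSpace ℝ (Fin (n + 1)))).toSphere.real univ *
      (Real.Gamma (((n : ℝ) + 1) / 2) / 2) = π ^ (((n : ℝ) + 1) / 2) := by
  have h := cap_polar (d := n + 1) (by omega) (fun x => rexp (-1 * ‖x‖ ^ 2)) (fun _ => 1)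
    (fun r => rexp (-r ^ 2)) (fun u r hr => by simp [norm_smul])
  rw [GaussianFourier.integral_rexp_neg_mul_sq_norm one_pos, Nat.add_sub_cancel, cap_radial] at h
  simpa using h.symm

lemma cap_final (n : ℕ) (s : ℝ) (hs : s ^ 2 ≤ 1)
    (f : sphere (0 : EuclideanSpace ℝ (Fin (n + 1))) 1 → ℝ)
    (hf : (∫ u, f u ∂(volume : Measure (EuclideanSpace ℝ (Fin (n + 1)))).toSphere) *
      ∫ y in Ioi (0 : ℝ), y ^ (n + 1 - 1) * (y * rexp (-y ^ 2)) =
        (π * (1 - s ^ 2)) ^ ((n : ℝ) / 2) / 2) :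
    ∫ u, f u ∂(sphereUniform (n + 1)) =
      Real.Gamma (((n + 1 : ℕ) : ℝ) / 2) * (1 - s ^ 2) ^ ((((n + 1 : ℕ) : ℝ) - 1) / 2)
        / (2 * Real.sqrt π * Real.Gamma ((((n + 1 : ℕ) : ℝ) + 1) / 2)) := by
  have h1 := cap_total n
  have h2 := cap_radial (n + 1)
  have h3 : ∀ y : ℝ, y ^ (n + 1 - 1) * (y * rexp (-y ^ 2)) = y ^ (n + 1) * rexp (-y ^ 2) := by
    intro y; rw [Nat.add_sub_cancel]; ring
  simp_rw [h3] at hf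
  rw [h2, Real.mul_rpow pi_pos.le (by linarith)] at hf
  rw [sphereUniform, integral_smul_measure, ENNReal.toReal_inv, smul_eq_mul]
  change (Measure.real _ univ)⁻¹ * _ = _
  push_cast at hf ⊢
  have g1 : 0 < Real.Gamma (((n : ℝ) + 1) / 2) := Real.Gamma_pos_of_pos (by positivity)
  have g2 : 0 < Real.Gamma (((n : ℝ) + 1 + 1) / 2) := Real.Gamma_pos_of_pos (by positivity)
  have hp : π ^ (((n : ℝ) + 1) / 2) = π ^ ((n : ℝ) / 2) * √π := by
    rw [add_div, Real.rpow_add pi_pos, Real.sqrt_eq_rpow]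
  have hP : 0 < π ^ ((n : ℝ) / 2) := by positivity
  have hq : 0 < √π := by positivity
  rw [hp] at h1
  rw [add_sub_cancel_right]
  set P := π ^ ((n : ℝ) / 2)
  set Q := (1 - s ^ 2) ^ ((n : ℝ) / 2)
  set S := (volume : Measure (EuclideanSpace ℝ (Fin (n + 1)))).toSphere.real univ
  set A := ∫ u, f u ∂(volume : Measure (EuclideanSpace ℝ (Fin (n + 1)))).toSphere
  have hS : S = 2 * P * √π / Real.Gamma (((n : ℝ) + 1) / 2) := by
    field_simp; linarith
  have hA : A = P * Q / Real.Gamma (((n : ℝ) + 1 + 1) / 2) := by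
    field_simp; linarith
  rw [hS, hA]
  field_simp

/-- For a unit vector `g ∈ ℝ^d` (`d ≥ 2`), `u` uniform on `S^{d-1}` and `s ∈ [0,1]`:
`E[⟨g,u⟩·1{⟨g,u⟩ ≥ -s}] = Γ(d/2)·(1-s²)^((d-1)/2)/(2√π·Γ((d+1)/2))` and
`E[⟨g,u⟩·1{⟨g,u⟩ ≤ -s}] = −Γ(d/2)·(1-s²)^((d-1)/2)/(2√π·Γ((d+1)/2))`. -/
theorem spherical_cap_inner_expectations
    (d : ℕ) (hd : 2 ≤ d) (g : EuclideanSpace ℝ (Fin d)) (hg : ‖g‖ = 1)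
    (s : ℝ) (hs : s ∈ Set.Icc (0 : ℝ) 1) :
    (∫ u : (sphere (0 : EuclideanSpace ℝ (Fin d)) 1),
        (⟪g, (u : EuclideanSpace ℝ (Fin d))⟫ *
          (if -s ≤ ⟪g, (u : EuclideanSpace ℝ (Fin d))⟫ then (1 : ℝ) else 0))
        ∂(sphereUniform d))
      = Real.Gamma ((d : ℝ) / 2) * (1 - s ^ 2) ^ (((d : ℝ) - 1) / 2)
        / (2 * Real.sqrt π * Real.Gamma (((d : ℝ) + 1) / 2)) ∧
    (∫ u : (sphere (0 : EuclideanSpace ℝ (Fin d)) 1),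
        (⟪g, (u : EuclideanSpace ℝ (Fin d))⟫ *
          (if ⟪g, (u : EuclideanSpace ℝ (Fin d))⟫ ≤ -s then (1 : ℝ) else 0))
        ∂(sphereUniform d))
      = -(Real.Gamma ((d : ℝ) / 2) * (1 - s ^ 2) ^ (((d : ℝ) - 1) / 2)
        / (2 * Real.sqrt π * Real.Gamma (((d : ℝ) + 1) / 2))) := by
  obtain ⟨n, rfl⟩ : ∃ n, d = n + 1 := ⟨d - 1, by omega⟩
  have hn : 1 ≤ n := by omega
  have hs2 : s ^ 2 ≤ 1 := by nlinarith [hs.1, hs.2]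
  constructor
  · refine cap_final n s hs2 _ ?_
    rw [← cap_gauss hn g hg hs2]
    refine (cap_polar (by omega) _ _ _ ?_).symm
    intro u r hr
    have hu : ‖(u : EuclideanSpace ℝ (Fin (n + 1)))‖ = 1 := by simp
    have hc : -s * r ≤ r * ⟪g, (u : EuclideanSpace ℝ (Fin (n + 1)))⟫ ↔
        -s ≤ ⟪g, (u : EuclideanSpace ℝ (Fin (n + 1)))⟫ := by
      rw [mul_comm, mul_le_mul_iff_right₀ hr]
    rw [capF, inner_smul_right, norm_smul, hu, Real.norm_of_nonneg hr.le, mul_one]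
    simp only [hc]
    ring
  · rw [← neg_eq_iff_eq_neg, ← integral_neg]
    refine cap_final n s hs2 _ ?_
    have hs3 : (-s) ^ 2 ≤ 1 := by rwa [neg_sq]
    rw [← neg_sq s, ← cap_gauss hn g hg hs3,
      ← integral_neg_eq_self (fun x => capF (-s) ⟪g, x⟫ ‖x‖) volume]
    refine (cap_polar (by omega) _ _ _ ?_).symm
    intro u r hr
    have hu : ‖(u : EuclideanSpace ℝ (Fin (n + 1)))‖ = 1 := by simp
    have hc : - -s * r ≤ -(r * ⟪g, (u : EuclideanSpace ℝ (Fin (n + 1)))⟫) ↔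
        ⟪g, (u : EuclideanSpace ℝ (Fin (n + 1)))⟫ ≤ -s := by
      rw [← mul_le_mul_iff_right₀ hr (b := ⟪g, (u : EuclideanSpace ℝ (Fin (n + 1)))⟫)]
      constructor <;> intro <;> linarith
    rw [capF, inner_neg_right, norm_neg, inner_smul_right, norm_smul, hu,
      Real.norm_of_nonneg hr.le, mul_one]
    simp only [hc]
    ring
end

section
/- There exists a constant C > 0 such that the following holds. Let d ≥ 2 and n ≥ 1 be integers, g ∈ ℝ^d a unit vector, s ∈ [0,1], β ∈ (1/2, 1), and ε₁, ε₂ > 0. Let u₁, …, uₙ be i.i.d. uniform on S^{d-1}, set φ̂(u) = (1-β)·1{⟨g,u⟩ > -s} − β·1{⟨g,u⟩ ≤ -s}, Ĝ = (1/n)·Σ_{i=1}^n φ̂(uᵢ)uᵢ (which is nonzero almost surely), μ = E[⟨g, Ĝ⟩ / ‖Ĝ‖], A = E[φ̂(u₁)·⟨g,u₁⟩], V = E[φ̂(u₁)²], and K = n(n+1)·exp(−C·d·ε₁²) + 2·exp(−2nε₂²/(2β−1)²). If V − ε₂ − (n−1)β²ε₁ > 0, then μ ≤ √n·A / √(V −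 ε₂ − (n−1)β²ε₁) + (1 + √n·β / √(V − ε₂ − (n−1)β²ε₁))·K, and μ ≥ √n·A / √(V + ε₂ + (n−1)β²ε₁) − (1 + √n·β / √(V + ε₂ + (n−1)β²ε₁))·K. -/
open MeasureTheory Metric Set Real
open scoped RealInnerProductSpace

/-- The AGREST sampling weight function
`φ̂(u) = (1-β)·1{⟨g,u⟩ > -s} − β·1{⟨g,u⟩ ≤ -s}`. -/
noncomputable def phiHat (d : ℕ) (g : EuclideanSpace ℝ (Fin d)) (s β : ℝ)
    (u : sphere (0 : EuclideanSpace ℝ (Fin d)) 1) : ℝ :=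
  if -s < ⟪g, (u : EuclideanSpace ℝ (Fin d))⟫ then 1 - β else -β

/-- The AGREST estimator `Ĝ = (1/n)·Σᵢ φ̂(uᵢ)·uᵢ`. -/
noncomputable def Ghat (d n : ℕ) (g : EuclideanSpace ℝ (Fin d)) (s β : ℝ)
    (ω : Fin n → (sphere (0 : EuclideanSpace ℝ (Fin d)) 1)) :
    EuclideanSpace ℝ (Fin d) :=
  (1 / (n : ℝ)) • ∑ i, phiHat d g s β (ω i) • ((ω i : EuclideanSpace ℝ (Fin d)))


lemma prob_sphere (d : ℕ) (hd : 2 ≤ d) : IsProbabilityMeasure (sphereUniform d) := by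
  have : Nonempty (Fin d) := ⟨⟨0, by omega⟩⟩
  constructor
  unfold sphereUniform
  rw [Measure.smul_apply, smul_eq_mul]
  apply ENNReal.inv_mul_cancel
  · rw [Ne, Measure.measure_univ_eq_zero]
    exact Measure.toSphere_ne_zero _
  · exact measure_ne_top _ _

open scoped Pointwise in
lemma cap_bound (d : ℕ) (hd : 2 ≤ d) (v : EuclideanSpace ℝ (Fin d)) (hv : ‖v‖ = 1) (t : ℝ)
    (ht : 0 < t) :
    sphereUniform d {u | t ≤ ⟪v, (u : EuclideanSpace ℝ (Fin d))⟫} ≤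
      ENNReal.ofReal (Real.exp (-(3 / 8 * d * t ^ 2))) := by
  have : Nonempty (Fin d) := ⟨⟨0, by omega⟩⟩
  have hm : MeasurableSet {u : sphere (0 : EuclideanSpace ℝ (Fin d)) 1 |
      t ≤ ⟪v, (u : EuclideanSpace ℝ (Fin d))⟫} := by
    apply measurableSet_le <;> fun_prop
  by_cases ht1 : 1 < t
  · have : {u : sphere (0 : EuclideanSpace ℝ (Fin d)) 1 |
      t ≤ ⟪v, (u : EuclideanSpace ℝ (Fin d))⟫} = ∅ := by
      ext u
      simp only [mem_ofPred_eq, mem_empty_iff_false, iff_false, not_le]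
      have h := real_inner_le_norm v (u : EuclideanSpace ℝ (Fin d))
      have hu : ‖(u : EuclideanSpace ℝ (Fin d))‖ = 1 := by simpa using u.2
      rw [hv, hu] at h
      linarith
    rw [this]; simp
  push Not at ht1
  have hsub : Ioo (0 : ℝ) 1 • ((↑) '' {u : sphere (0 : EuclideanSpace ℝ (Fin d)) 1 |
      t ≤ ⟪v, (u : EuclideanSpace ℝ (Fin d))⟫}) ⊆
      closedBall ((t / 2) • v) (Real.exp (-(3 / 8 * t ^ 2))) := by
    rintro x ⟨r, ⟨hr0, hr1⟩, _, ⟨u, hu, rfl⟩, rfl⟩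
    have hu1 : ‖(u : EuclideanSpace ℝ (Fin d))‖ = 1 := by simpa using u.2
    simp only [mem_ofPred_eq] at hu
    rw [mem_closedBall, dist_eq_norm]
    apply le_of_sq_le_sq _ (Real.exp_pos _).le
    rw [← Real.exp_nat_mul]
    simp only
    rw [norm_sub_sq_real, norm_smul, norm_smul, hv, hu1, inner_smul_left, inner_smul_right,
      real_inner_comm]
    simp only [Real.norm_eq_abs, mul_one, sq_abs, conj_trivial]
    have h1 := Real.add_one_le_exp (((2 : ℕ) : ℝ) * -(3 / 8 * t ^ 2))
    refine le_trans ?_ h1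
    push_cast
    have : r * (t / 2 * t) ≤ r * (t / 2 * ⟪v, (u : EuclideanSpace ℝ (Fin d))⟫) := by gcongr
    nlinarith [mul_pos hr0 (sub_pos.2 hr1), mul_nonneg (sub_nonneg.2 hr1.le) (sub_nonneg.2 ht1),
      mul_nonneg (sub_nonneg.2 hr1.le) (mul_nonneg (sub_nonneg.2 ht1) (by linarith : 0 ≤ 1 + t))]
  unfold sphereUniform
  rw [Measure.smul_apply, smul_eq_mul, Measure.toSphere_apply' _ hm, Measure.toSphere_apply_univ]
  have hb : (volume : Measure (EuclideanSpace ℝ (Fin d))) (Ioo (0 : ℝ) 1 • ((↑) '' {u : sphere (0 : EuclideanSpace ℝ (Fin d)) 1 |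
      t ≤ ⟪v, (u : EuclideanSpace ℝ (Fin d))⟫})) ≤
      ENNReal.ofReal (Real.exp (-(3 / 8 * d * t ^ 2))) * volume (ball (0 : EuclideanSpace ℝ (Fin d)) 1) := by
    refine (measure_mono hsub).trans ?_
    rw [Measure.addHaar_closedBall _ _ (Real.exp_pos _).le, ← Real.exp_nat_mul,
      finrank_euclideanSpace_fin]
    apply le_of_eq
    congr 3
    ring
  set D : ENNReal := (Module.finrank ℝ (EuclideanSpace ℝ (Fin d)) : ENNReal)
  have hD0 : D * volume (ball (0 : EuclideanSpace ℝ (Fin d)) 1) ≠ 0 := by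
    apply mul_ne_zero
    · simp [D]; omega
    · exact (measure_ball_pos _ _ one_pos).ne'
  have hDt : D * volume (ball (0 : EuclideanSpace ℝ (Fin d)) 1) ≠ ⊤ :=
    ENNReal.mul_ne_top (by simp [D]) measure_ball_lt_top.ne
  calc _ ≤ (D * volume (ball (0 : EuclideanSpace ℝ (Fin d)) 1))⁻¹ * (D *
        (ENNReal.ofReal (Real.exp (-(3 / 8 * d * t ^ 2))) * volume (ball (0 : EuclideanSpace ℝ (Fin d)) 1))) := by gcongr
    _ = ((D * volume (ball (0 : EuclideanSpace ℝ (Fin d)) 1))⁻¹ *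
        (D * volume (ball (0 : EuclideanSpace ℝ (Fin d)) 1))) * ENNReal.ofReal (Real.exp (-(3 / 8 * d * t ^ 2))) := by ring
    _ = _ := by rw [ENNReal.inv_mul_cancel hD0 hDt, one_mul]

lemma cap_bound2 (d : ℕ) (hd : 2 ≤ d) (v : EuclideanSpace ℝ (Fin d)) (hv : ‖v‖ = 1) (t : ℝ)
    (ht : 0 < t) :
    sphereUniform d {u | t ≤ |⟪v, (u : EuclideanSpace ℝ (Fin d))⟫|} ≤
      ENNReal.ofReal (2 * Real.exp (-(3 / 8 * d * t ^ 2))) := by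
  have h1 := cap_bound d hd v hv t ht
  have h2 := cap_bound d hd (-v) (by simpa using hv) t ht
  rw [two_mul, ENNReal.ofReal_add (Real.exp_pos _).le (Real.exp_pos _).le]
  refine le_trans (measure_mono ?_) ((measure_union_le _ _).trans (add_le_add h1 h2))
  intro u hu
  simp only [mem_ofPred_eq, mem_union, inner_neg_left] at hu ⊢
  exact le_abs.1 hu

lemma pair_bound (d n : ℕ) (hd : 2 ≤ d) (i j : Fin n) (hij : i ≠ j) (t : ℝ) (ht : 0 < t) :
    Measure.pi (fun _ : Fin n => sphereUniform d)
      {ω | t ≤ |⟪(ω i : EuclideanSpace ℝ (Fin d)), (ω j : EuclideanSpace ℝ (Fin d))⟫|} ≤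
      ENNReal.ofReal (2 * Real.exp (-(3 / 8 * d * t ^ 2))) := by
  have := prob_sphere d hd
  have hind := ProbabilityTheory.iIndepFun_pi (μ := fun _ : Fin n => sphereUniform d)
    (X := fun _ => (id : sphere (0 : EuclideanSpace ℝ (Fin d)) 1 → _)) (fun _ => aemeasurable_id)
  have h2 := (ProbabilityTheory.indepFun_iff_map_prod_eq_prod_map_map
    (by exact (measurable_pi_apply i).aemeasurable) (by exact (measurable_pi_apply j).aemeasurable)).1 (hind.indepFun hij)
  simp only [id] at h2
  have e1 := (measurePreserving_eval (fun _ : Fin n => sphereUniform d) i).map_eq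
  have e2 := (measurePreserving_eval (fun _ : Fin n => sphereUniform d) j).map_eq
  have e1' : Measure.map (fun ω : Fin n → sphere (0 : EuclideanSpace ℝ (Fin d)) 1 => ω i) (Measure.pi (fun _ : Fin n => sphereUniform d)) = sphereUniform d := e1
  have e2' : Measure.map (fun ω : Fin n → sphere (0 : EuclideanSpace ℝ (Fin d)) 1 => ω j) (Measure.pi (fun _ : Fin n => sphereUniform d)) = sphereUniform d := e2
  rw [e1', e2'] at h2
  set S : Set (sphere (0 : EuclideanSpace ℝ (Fin d)) 1 × sphere (0 : EuclideanSpace ℝ (Fin d)) 1) :=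
    {p | t ≤ |⟪(p.1 : EuclideanSpace ℝ (Fin d)), (p.2 : EuclideanSpace ℝ (Fin d))⟫|} with hS
  have hSm : MeasurableSet S := by
    apply measurableSet_le
    · fun_prop
    · apply Continuous.measurable; fun_prop
  have : {ω : Fin n → sphere (0 : EuclideanSpace ℝ (Fin d)) 1 | t ≤ |⟪(ω i : EuclideanSpace ℝ (Fin d)), (ω j : EuclideanSpace ℝ (Fin d))⟫|}
      = (fun ω => (ω i, ω j)) ⁻¹' S := rfl
  rw [this, ← Measure.map_apply (by fun_prop) hSm, h2, Measure.prod_apply hSm]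
  calc _ ≤ ∫⁻ x, ENNReal.ofReal (2 * Real.exp (-(3 / 8 * d * t ^ 2))) ∂(sphereUniform d) := by
        apply lintegral_mono
        intro x
        exact cap_bound2 d hd x (by simp) t ht
    _ = _ := by simp

lemma eval_bound (d n : ℕ) (hd : 2 ≤ d) (i : Fin n) (v : EuclideanSpace ℝ (Fin d)) (hv : ‖v‖ = 1) (t : ℝ) (ht : 0 < t) :
    Measure.pi (fun _ : Fin n => sphereUniform d)
      {ω | t ≤ |⟪v, (ω i : EuclideanSpace ℝ (Fin d))⟫|} ≤
      ENNReal.ofReal (2 * Real.exp (-(3 / 8 * d * t ^ 2))) := by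
  have := prob_sphere d hd
  have hSm : MeasurableSet {u : sphere (0 : EuclideanSpace ℝ (Fin d)) 1 |
      t ≤ |⟪v, (u : EuclideanSpace ℝ (Fin d))⟫|} := by
    apply measurableSet_le <;> fun_prop
  have := (measurePreserving_eval (fun _ : Fin n => sphereUniform d) i).measure_preimage hSm.nullMeasurableSet
  exact this.trans_le (cap_bound2 d hd v hv t ht)

noncomputable def isoS (d : ℕ) (e : EuclideanSpace ℝ (Fin d) ≃ₗᵢ[ℝ] EuclideanSpace ℝ (Fin d))
    (u : sphere (0 : EuclideanSpace ℝ (Fin d)) 1) : sphere (0 : EuclideanSpace ℝ (Fin d)) 1 :=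
  ⟨e u, by simp⟩

open scoped Pointwise in
lemma isoS_mp (d : ℕ) (e : EuclideanSpace ℝ (Fin d) ≃ₗᵢ[ℝ] EuclideanSpace ℝ (Fin d)) :
    MeasurePreserving (isoS d e) (sphereUniform d) (sphereUniform d) := by
  have hmeas : Measurable (isoS d e) := by
    unfold isoS
    apply Measurable.subtype_mk
    exact e.continuous.measurable.comp measurable_subtype_coe
  refine ⟨hmeas, ?_⟩
  ext E hE
  rw [Measure.map_apply hmeas hE]
  unfold sphereUniform
  rw [Measure.smul_apply, Measure.smul_apply, Measure.toSphere_apply' _ hE,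
    Measure.toSphere_apply' _ (hmeas hE)]
  have : Ioo (0 : ℝ) 1 • ((↑) '' (isoS d e ⁻¹' E) : Set (EuclideanSpace ℝ (Fin d))) =
      e ⁻¹' (Ioo (0 : ℝ) 1 • ((↑) '' E)) := by
    ext x
    constructor
    · rintro ⟨r, hr, _, ⟨u, hu, rfl⟩, rfl⟩
      exact ⟨r, hr, _, ⟨_, hu, rfl⟩, by simp [isoS]⟩
    · rintro ⟨r, hr, _, ⟨u, hu, rfl⟩, h⟩
      refine ⟨r, hr, _, ⟨isoS d e.symm u, ?_, rfl⟩, ?_⟩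
      · simpa [isoS] using hu
      · apply e.injective
        simpa [isoS] using h
  rw [this]
  congr 2
  have h1 := e.measurePreserving.measure_preimage_equiv (f := e.toHomeomorph.toMeasurableEquiv)
    (Ioo (0 : ℝ) 1 • ((↑) '' E))
  exact h1

open Classical in
noncomputable def TT (d : ℕ) (g : EuclideanSpace ℝ (Fin d)) (s : ℝ)
    (u : sphere (0 : EuclideanSpace ℝ (Fin d)) 1) : sphere (0 : EuclideanSpace ℝ (Fin d)) 1 :=
  if |⟪g, (u : EuclideanSpace ℝ (Fin d))⟫| < s then isoS d ((ℝ ∙ g)ᗮ.reflection) u else u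

lemma isoS_coe (d : ℕ) (g : EuclideanSpace ℝ (Fin d)) (hg : ‖g‖ = 1)
    (u : sphere (0 : EuclideanSpace ℝ (Fin d)) 1) :
    (isoS d ((ℝ ∙ g)ᗮ.reflection) u : EuclideanSpace ℝ (Fin d)) =
      u - (2 * ⟪g, (u : EuclideanSpace ℝ (Fin d))⟫) • g := by
  unfold isoS
  simp only
  rw [Submodule.reflection_orthogonal_apply, Submodule.reflection_singleton_apply, hg]
  simp [two_smul, mul_smul]

lemma isoS_inner (d : ℕ) (g : EuclideanSpace ℝ (Fin d)) (hg : ‖g‖ = 1)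
    (u : sphere (0 : EuclideanSpace ℝ (Fin d)) 1) :
    ⟪g, (isoS d ((ℝ ∙ g)ᗮ.reflection) u : EuclideanSpace ℝ (Fin d))⟫ =
      - ⟪g, (u : EuclideanSpace ℝ (Fin d))⟫ := by
  rw [isoS_coe d g hg, inner_sub_right, inner_smul_right, real_inner_self_eq_norm_sq, hg]
  ring

lemma TT_mp (d : ℕ) (g : EuclideanSpace ℝ (Fin d)) (hg : ‖g‖ = 1) (s : ℝ) :
    MeasurePreserving (TT d g s) (sphereUniform d) (sphereUniform d) := by
  have hS : MeasurableSet {u : sphere (0 : EuclideanSpace ℝ (Fin d)) 1 |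
      |⟪g, (u : EuclideanSpace ℝ (Fin d))⟫| < s} := by
    apply measurableSet_lt <;> fun_prop
  have hR := isoS_mp d ((ℝ ∙ g)ᗮ.reflection)
  have hm : Measurable (TT d g s) := by
    unfold TT
    exact Measurable.ite hS hR.measurable measurable_id
  refine ⟨hm, ?_⟩
  ext E hE
  rw [Measure.map_apply hm hE]
  set S := {u : sphere (0 : EuclideanSpace ℝ (Fin d)) 1 |
      |⟪g, (u : EuclideanSpace ℝ (Fin d))⟫| < s} with hSdef
  rw [← measure_inter_add_sdiff (TT d g s ⁻¹' E) hS, ← measure_inter_add_sdiff E hS]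
  congr 1
  · rw [← hR.measure_preimage (hE.inter hS).nullMeasurableSet]
    congr 1
    ext u
    simp only [mem_inter_iff, mem_preimage, hSdef, mem_ofPred_eq, isoS_inner d g hg, abs_neg]
    constructor
    · rintro ⟨h1, h2⟩
      rw [TT, if_pos h2] at h1
      exact ⟨h1, h2⟩
    · rintro ⟨h1, h2⟩
      rw [TT, if_pos h2]
      exact ⟨h1, h2⟩
  · congr 1
    ext u
    simp only [mem_sdiff, mem_preimage, hSdef, mem_ofPred_eq]
    constructor
    · rintro ⟨h1, h2⟩
      rw [TT, if_neg h2] at h1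
      exact ⟨h1, h2⟩
    · rintro ⟨h1, h2⟩
      rw [TT, if_neg h2]
      exact ⟨h1, h2⟩

lemma phi_TT (d : ℕ) (g : EuclideanSpace ℝ (Fin d)) (hg : ‖g‖ = 1) (s β : ℝ)
    (u : sphere (0 : EuclideanSpace ℝ (Fin d)) 1) :
    phiHat d g s β (TT d g s u) = phiHat d g s β u := by
  by_cases h : |⟪g, (u : EuclideanSpace ℝ (Fin d))⟫| < s
  · rw [TT, if_pos h]
    unfold phiHat
    rw [isoS_inner d g hg]
    rw [abs_lt] at h
    rw [if_pos (by linarith), if_pos (by linarith)]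
  · rw [TT, if_neg h]

/-- `TT u = u - c g` for some scalar with good properties. -/
lemma TT_coe (d : ℕ) (g : EuclideanSpace ℝ (Fin d)) (hg : ‖g‖ = 1) (s : ℝ)
    (u : sphere (0 : EuclideanSpace ℝ (Fin d)) 1) :
    ∃ c : ℝ, (TT d g s u : EuclideanSpace ℝ (Fin d)) = u - c • g ∧
      |⟪g, (TT d g s u : EuclideanSpace ℝ (Fin d))⟫| = |⟪g, (u : EuclideanSpace ℝ (Fin d))⟫| := by
  by_cases h : |⟪g, (u : EuclideanSpace ℝ (Fin d))⟫| < s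
  · rw [TT, if_pos h]
    exact ⟨_, isoS_coe d g hg u, by rw [isoS_inner d g hg, abs_neg]⟩
  · rw [TT, if_neg h]
    exact ⟨0, by simp, rfl⟩

lemma TT_nonneg (d : ℕ) (g : EuclideanSpace ℝ (Fin d)) (hg : ‖g‖ = 1) (s β : ℝ) (hs : 0 ≤ s)
    (h0 : 0 ≤ β) (h1 : β ≤ 1)
    (u : sphere (0 : EuclideanSpace ℝ (Fin d)) 1) :
    0 ≤ phiHat d g s β u * (⟪g, (u : EuclideanSpace ℝ (Fin d))⟫ +
      ⟪g, (TT d g s u : EuclideanSpace ℝ (Fin d))⟫) := by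
  by_cases h : |⟪g, (u : EuclideanSpace ℝ (Fin d))⟫| < s
  · rw [TT, if_pos h, isoS_inner d g hg]
    simp
  · rw [TT, if_neg h]
    unfold phiHat
    split_ifs with h2
    · rcases le_abs.1 (not_lt.1 h) with h3 | h3
      · have : 0 ≤ ⟪g, (u : EuclideanSpace ℝ (Fin d))⟫ := by linarith
        have : 0 ≤ 1 - β := by linarith
        positivity
      · linarith
    · nlinarith [not_lt.1 h2]

/-- inner product bound after TT -/
lemma TT_inner_le (d : ℕ) (g : EuclideanSpace ℝ (Fin d)) (hg : ‖g‖ = 1) (s : ℝ)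
    (u w : sphere (0 : EuclideanSpace ℝ (Fin d)) 1) :
    |⟪(TT d g s u : EuclideanSpace ℝ (Fin d)), (TT d g s w : EuclideanSpace ℝ (Fin d))⟫| ≤
      |⟪(u : EuclideanSpace ℝ (Fin d)), (w : EuclideanSpace ℝ (Fin d))⟫| +
      2 * (|⟪g, (u : EuclideanSpace ℝ (Fin d))⟫| * |⟪g, (w : EuclideanSpace ℝ (Fin d))⟫|) := by
  obtain ⟨a, ha, ha'⟩ := TT_coe d g hg s u
  obtain ⟨b, hb, hb'⟩ := TT_coe d g hg s w
  have key : ⟪(TT d g s u : EuclideanSpace ℝ (Fin d)), (TT d g s w : EuclideanSpace ℝ (Fin d))⟫ =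
      ⟪(u : EuclideanSpace ℝ (Fin d)), (w : EuclideanSpace ℝ (Fin d))⟫ -
      ⟪g, (u : EuclideanSpace ℝ (Fin d))⟫ * ⟪g, (w : EuclideanSpace ℝ (Fin d))⟫ +
      ⟪g, (TT d g s u : EuclideanSpace ℝ (Fin d))⟫ *
      ⟪g, (TT d g s w : EuclideanSpace ℝ (Fin d))⟫ := by
    rw [ha, hb]
    simp only [inner_sub_left, inner_sub_right, inner_smul_left, inner_smul_right,
      real_inner_self_eq_norm_sq, hg, conj_trivial,
      real_inner_comm g (u : EuclideanSpace ℝ (Fin d))]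
    ring
  rw [key]
  have h1 := abs_add_le (⟪(u : EuclideanSpace ℝ (Fin d)), (w : EuclideanSpace ℝ (Fin d))⟫ -
      ⟪g, (u : EuclideanSpace ℝ (Fin d))⟫ * ⟪g, (w : EuclideanSpace ℝ (Fin d))⟫)
      (⟪g, (TT d g s u : EuclideanSpace ℝ (Fin d))⟫ *
      ⟪g, (TT d g s w : EuclideanSpace ℝ (Fin d))⟫)
  have h2 := abs_sub (⟪(u : EuclideanSpace ℝ (Fin d)), (w : EuclideanSpace ℝ (Fin d))⟫)
      (⟪g, (u : EuclideanSpace ℝ (Fin d))⟫ * ⟪g, (w : EuclideanSpace ℝ (Fin d))⟫)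
  rw [abs_mul, ha', hb'] at h1
  rw [abs_mul] at h2
  linarith

lemma cos_upper (h₁ h₂ H₁ H₂ l : ℝ) (hl : 0 < l) (h1 : l ≤ H₁) (h2 : l ≤ H₂)
    (hP : H₁ ^ 2 - h₁ ^ 2 = H₂ ^ 2 - h₂ ^ 2) (hs : 0 ≤ h₁ + h₂) :
    h₁ / H₁ + h₂ / H₂ ≤ (h₁ + h₂) / l := by
  wlog hle : h₂ ≤ h₁ generalizing h₁ h₂ H₁ H₂
  · have := this h₂ h₁ H₂ H₁ h2 h1 hP.symm (by linarith) (by linarith)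
    rw [add_comm, add_comm h₁]; exact this
  have hh1 : 0 ≤ h₁ := by linarith
  rcases le_total 0 h₂ with h | h
  · rw [add_div]; gcongr
  · have hH : H₂ ≤ H₁ := by
      apply le_of_sq_le_sq _ (by linarith)
      nlinarith
    have hH2 : 0 < H₂ := by linarith
    calc h₁ / H₁ + h₂ / H₂ ≤ h₁ / H₂ + h₂ / H₂ := by gcongr
      _ = (h₁ + h₂) / H₂ := by ring
      _ ≤ _ := by gcongr

lemma cos_lower (h₁ h₂ H₁ H₂ m : ℝ) (hm : 0 < m) (h1 : 0 < H₁) (h2 : 0 < H₂)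
    (hP : H₁ ^ 2 - h₁ ^ 2 = H₂ ^ 2 - h₂ ^ 2) (hs : 0 ≤ h₁ + h₂)
    (hm1 : H₁ ^ 2 + 6 * h₁ ^ 2 ≤ m ^ 2) (hm2 : H₂ ^ 2 + 6 * h₂ ^ 2 ≤ m ^ 2)
    (hx1 : 2 * h₁ ^ 2 ≤ H₁ ^ 2) (hx2 : 2 * h₂ ^ 2 ≤ H₂ ^ 2) :
    (h₁ + h₂) / m ≤ h₁ / H₁ + h₂ / H₂ := by
  wlog hle : h₂ ≤ h₁ generalizing h₁ h₂ H₁ H₂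
  · have := this h₂ h₁ H₂ H₁ h2 h1 hP.symm (by linarith) hm2 hm1 hx2 hx1 (by linarith)
    rw [add_comm, add_comm (h₁ / H₁)]; exact this
  have hh1 : 0 ≤ h₁ := by linarith
  have hHm1 : H₁ ≤ m := by
    apply le_of_sq_le_sq _ hm.le
    nlinarith
  have hHm2 : H₂ ≤ m := by
    apply le_of_sq_le_sq _ hm.le
    nlinarith
  rcases le_total 0 h₂ with h | h
  · rw [add_div]; gcongr
  · obtain ⟨y, rfl⟩ : ∃ y, h₂ = -y := ⟨-h₂, by ring⟩
    have hH : H₂ ≤ H₁ := by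
      apply le_of_sq_le_sq _ (by linarith)
      nlinarith
    have hy : 0 ≤ y := by linarith
    have hyh : 0 ≤ h₁ - y := by linarith
    set P := H₁ ^ 2 - h₁ ^ 2 with hPd
    have hP0 : 0 ≤ P := by nlinarith
    rcases hh1.eq_or_lt with h0 | h0
    · have : y = 0 := by linarith
      subst this; rw [← h0]; simp
    have hc : H₁ ^ 3 ≤ P * m := by
      apply le_of_sq_le_sq _ (by positivity)
      have : (H₁ ^ 2) ^ 3 ≤ P ^ 2 * (H₁ ^ 2 + 6 * h₁ ^ 2) := by
        have e : P ^ 2 * (H₁ ^ 2 + 6 * h₁ ^ 2) - (H₁ ^ 2) ^ 3 =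
          h₁ ^ 2 * ((H₁ ^ 2 - 2 * h₁ ^ 2) * (4 * H₁ ^ 2 - 3 * h₁ ^ 2)) := by
          rw [hPd]; ring
        have : 0 ≤ h₁ ^ 2 * ((H₁ ^ 2 - 2 * h₁ ^ 2) * (4 * H₁ ^ 2 - 3 * h₁ ^ 2)) := by
          apply mul_nonneg (sq_nonneg _) (mul_nonneg (by linarith) (by nlinarith))
        linarith
      calc (H₁ ^ 3) ^ 2 = (H₁ ^ 2) ^ 3 := by ring
        _ ≤ P ^ 2 * (H₁ ^ 2 + 6 * h₁ ^ 2) := this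
        _ ≤ P ^ 2 * m ^ 2 := by gcongr
        _ = _ := by ring
    have hD : 0 < h₁ * H₂ + y * H₁ := by positivity
    have e1 : h₁ / H₁ + -y / H₂ = P * (h₁ - y) * (h₁ + y) / (H₁ * H₂ * (h₁ * H₂ + y * H₁)) := by
      have hHe : H₂ ^ 2 = P + y ^ 2 := by rw [hP]; ring
      have hHe1 : H₁ ^ 2 = P + h₁ ^ 2 := by rw [hPd]; ring
      rw [div_add_div _ _ h1.ne' h2.ne', div_eq_div_iff (by positivity) (by positivity)]
      linear_combination (H₁ * H₂ * h₁ ^ 2) * hHe - (H₁ * H₂ * y ^ 2) * hHe1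
    rw [e1, div_le_div_iff₀ hm (by positivity)]
    calc (h₁ + -y) * (H₁ * H₂ * (h₁ * H₂ + y * H₁))
        ≤ (h₁ - y) * (H₁ * H₁ * (h₁ * H₁ + y * H₁)) := by
          rw [← sub_eq_add_neg]; gcongr
      _ = (h₁ - y) * (h₁ + y) * H₁ ^ 3 := by ring
      _ ≤ (h₁ - y) * (h₁ + y) * (P * m) := by gcongr
      _ = _ := by ring

lemma phi_meas (d : ℕ) (g : EuclideanSpace ℝ (Fin d)) (s β : ℝ) :
    Measurable (phiHat d g s β) := by
  unfold phiHat
  refine Measurable.ite ?_ measurable_const measurable_const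
  apply measurableSet_lt <;> fun_prop

lemma phi_abs (d : ℕ) (g : EuclideanSpace ℝ (Fin d)) (s β : ℝ) (hβ : β ∈ Set.Ioo (1/2 : ℝ) 1)
    (u : sphere (0 : EuclideanSpace ℝ (Fin d)) 1) : |phiHat d g s β u| ≤ β := by
  obtain ⟨h1, h2⟩ := hβ
  unfold phiHat
  split_ifs <;> rw [abs_le] <;> constructor <;> linarith

lemma phi_sq (d : ℕ) (g : EuclideanSpace ℝ (Fin d)) (s β : ℝ) (hβ : β ∈ Set.Ioo (1/2 : ℝ) 1)
    (u : sphere (0 : EuclideanSpace ℝ (Fin d)) 1) :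
    phiHat d g s β u ^ 2 ∈ Set.Icc ((1 - β) ^ 2) (β ^ 2) := by
  obtain ⟨h1, h2⟩ := hβ
  unfold phiHat
  split_ifs <;> constructor <;> nlinarith

lemma hoeff (d n : ℕ) (hd : 2 ≤ d) (hn : 1 ≤ n) (g : EuclideanSpace ℝ (Fin d)) (s β : ℝ)
    (hβ : β ∈ Set.Ioo (1/2 : ℝ) 1) (ε : ℝ) (hε : 0 < ε) :
    (Measure.pi (fun _ : Fin n => sphereUniform d)).real
      {ω | ε ≤ |1 / (n : ℝ) * ∑ i, phiHat d g s β (ω i) ^ 2 -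
        ∫ u, (phiHat d g s β u) ^ 2 ∂(sphereUniform d)|} ≤
      2 * Real.exp (-2 * n * ε ^ 2 / (2 * β - 1) ^ 2) := by
  have := prob_sphere d hd
  set V := ∫ u, (phiHat d g s β u) ^ 2 ∂(sphereUniform d) with hV
  set P := Measure.pi (fun _ : Fin n => sphereUniform d) with hP
  have hpm := phi_meas d g s β
  have hind := ProbabilityTheory.iIndepFun_pi (μ := fun _ : Fin n => sphereUniform d)
    (X := fun _ u => phiHat d g s β u ^ 2 - V) (fun _ => by fun_prop)
  have hsub : ∀ i ∈ (Finset.univ : Finset (Fin n)), ProbabilityTheory.HasSubgaussianMGF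
      (fun ω : Fin n → sphere (0 : EuclideanSpace ℝ (Fin d)) 1 => phiHat d g s β (ω i) ^ 2 - V)
      ((‖β ^ 2 - (1 - β) ^ 2‖₊ / 2) ^ 2) P := by
    intro i _
    have h := ProbabilityTheory.hasSubgaussianMGF_of_mem_Icc (μ := P) (a := (1 - β) ^ 2)
      (b := β ^ 2)
      (X := fun ω : Fin n → sphere (0 : EuclideanSpace ℝ (Fin d)) 1 => phiHat d g s β (ω i) ^ 2)
      ((hpm.comp (measurable_pi_apply i)).pow_const 2).aemeasurable (Filter.Eventually.of_forall fun ω => phi_sq d g s β hβ _)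
    have e : ∫ ω, phiHat d g s β (ω i) ^ 2 ∂P = V := by
      rw [hP, integral_comp_eval (ι := Fin n) (μ := fun _ : Fin n => sphereUniform d) (i := i) (f := fun u => phiHat d g s β u ^ 2)]
      exact (by fun_prop : Measurable _).aestronglyMeasurable
    rw [e] at h
    exact h
  have hsum := ProbabilityTheory.HasSubgaussianMGF.sum_of_iIndepFun hind hsub
  have hn0 : (0 : ℝ) < n := by exact_mod_cast hn
  have hb : 0 < 2 * β - 1 := by have := hβ.1; linarith
  have hexp : -((n : ℝ) * ε) ^ 2 / (2 * ((∑ i : Fin n, (‖β ^ 2 - (1 - β) ^ 2‖₊ / 2) ^ 2 : NNReal) : ℝ)) =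
      -2 * n * ε ^ 2 / (2 * β - 1) ^ 2 := by
    have : ‖β ^ 2 - (1 - β) ^ 2‖ = 2 * β - 1 := by
      rw [Real.norm_eq_abs, abs_of_nonneg] <;> nlinarith
    simp only [Finset.sum_const, Finset.card_univ, Fintype.card_fin, nsmul_eq_mul]
    push_cast
    rw [this]
    field_simp
  have h1 := hsum.measure_ge_le (ε := n * ε) (by positivity)
  have h2 := hsum.neg.measure_ge_le (ε := n * ε) (by positivity)
  rw [hexp] at h1 h2
  rw [two_mul]
  refine le_trans (measureReal_mono ?_) ((measureReal_union_le _ _).trans (add_le_add h1 h2))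
  intro ω hω
  simp only [mem_ofPred_eq, mem_union, Pi.neg_apply] at hω ⊢
  have e : 1 / (n : ℝ) * ∑ i, phiHat d g s β (ω i) ^ 2 - V =
      1 / (n : ℝ) * ∑ i, (phiHat d g s β (ω i) ^ 2 - V) := by
    rw [Finset.sum_sub_distrib]
    simp only [Finset.sum_const, Finset.card_univ, Fintype.card_fin, nsmul_eq_mul]
    field_simp
  rw [e, abs_mul, abs_of_pos (by positivity), one_div, le_inv_mul_iff₀ hn0] at hω
  exact le_abs.1 hω

lemma norm_bound (d n : ℕ) (hn : 1 ≤ n) (g : EuclideanSpace ℝ (Fin d)) (s β : ℝ)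
    (hβ : β ∈ Set.Ioo (1/2 : ℝ) 1) (η : ℝ) (hη : 0 ≤ η)
    (ω : Fin n → sphere (0 : EuclideanSpace ℝ (Fin d)) 1)
    (hoff : ∀ i j, i ≠ j → |⟪(ω i : EuclideanSpace ℝ (Fin d)), (ω j : EuclideanSpace ℝ (Fin d))⟫| ≤ η) :
    |n * ‖Ghat d n g s β ω‖ ^ 2 - 1 / (n : ℝ) * ∑ i, phiHat d g s β (ω i) ^ 2| ≤
      ((n : ℝ) - 1) * β ^ 2 * η := by
  have hn0 : (0 : ℝ) < n := by exact_mod_cast hn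
  have e1 : n * ‖Ghat d n g s β ω‖ ^ 2 - 1 / (n : ℝ) * ∑ i, phiHat d g s β (ω i) ^ 2 =
      1 / (n : ℝ) * ∑ i, ∑ j, (if i = j then 0 else phiHat d g s β (ω i) * phiHat d g s β (ω j) *
        ⟪(ω i : EuclideanSpace ℝ (Fin d)), (ω j : EuclideanSpace ℝ (Fin d))⟫) := by
    unfold Ghat
    rw [norm_smul, mul_pow, ← real_inner_self_eq_norm_sq (∑ i, _), sum_inner]
    simp only [inner_sum, inner_smul_left, inner_smul_right, conj_trivial]
    have e2 : ∑ i, phiHat d g s β (ω i) ^ 2 =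
      ∑ i, ∑ j, (if i = j then phiHat d g s β (ω i) * phiHat d g s β (ω j) *
        ⟪(ω i : EuclideanSpace ℝ (Fin d)), (ω j : EuclideanSpace ℝ (Fin d))⟫ else 0) := by
      simp [real_inner_self_eq_norm_sq, sq]
    have e3 : (n : ℝ) * (‖1 / (n : ℝ)‖ ^ 2) = 1 / n := by
      rw [Real.norm_eq_abs, sq_abs]; field_simp
    rw [e2, ← mul_assoc, e3, ← mul_sub, ← Finset.sum_sub_distrib]
    congr 1
    apply Finset.sum_congr rfl
    intro i _
    rw [← Finset.sum_sub_distrib]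
    apply Finset.sum_congr rfl
    intro j _
    split_ifs <;> ring
  rw [e1, abs_mul, abs_of_pos (by positivity)]
  have hb : |∑ i, ∑ j, (if i = j then 0 else phiHat d g s β (ω i) * phiHat d g s β (ω j) *
        ⟪(ω i : EuclideanSpace ℝ (Fin d)), (ω j : EuclideanSpace ℝ (Fin d))⟫)| ≤
        ∑ i : Fin n, ∑ j : Fin n, (β ^ 2 * η - if i = j then β ^ 2 * η else 0) := by
    refine (Finset.abs_sum_le_sum_abs _ _).trans (Finset.sum_le_sum fun i _ => ?_)
    refine (Finset.abs_sum_le_sum_abs _ _).trans (Finset.sum_le_sum fun j _ => ?_)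
    split_ifs with hij
    · simp
    · rw [abs_mul, abs_mul, sub_zero, sq]
      have b0 : 0 ≤ β := by have := hβ.1; linarith
      have := phi_abs d g s β hβ (ω i)
      have := phi_abs d g s β hβ (ω j)
      have := hoff i j hij
      gcongr
  have e4 : ∑ i : Fin n, ∑ j : Fin n, (β ^ 2 * η - if i = j then β ^ 2 * η else 0) =
      n * (((n : ℝ) - 1) * β ^ 2 * η) := by
    simp only [Finset.sum_sub_distrib, Finset.sum_const, Finset.card_univ, Fintype.card_fin,
      nsmul_eq_mul, Finset.sum_ite_eq, Finset.mem_univ, if_true]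
    ring
  rw [e4] at hb
  rw [one_div, inv_mul_le_iff₀ hn0]
  exact hb

lemma inner_G (d n : ℕ) (g : EuclideanSpace ℝ (Fin d)) (s β : ℝ)
    (ω : Fin n → sphere (0 : EuclideanSpace ℝ (Fin d)) 1) :
    ⟪g, Ghat d n g s β ω⟫ = 1 / (n : ℝ) * ∑ i, phiHat d g s β (ω i) *
      ⟪g, (ω i : EuclideanSpace ℝ (Fin d))⟫ := by
  unfold Ghat
  rw [inner_smul_right, inner_sum]
  simp only [inner_smul_right]

lemma inner_G_abs (d n : ℕ) (hn : 1 ≤ n) (g : EuclideanSpace ℝ (Fin d)) (s β : ℝ)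
    (hβ : β ∈ Set.Ioo (1/2 : ℝ) 1) (δ : ℝ)
    (ω : Fin n → sphere (0 : EuclideanSpace ℝ (Fin d)) 1)
    (h : ∀ i, |⟪g, (ω i : EuclideanSpace ℝ (Fin d))⟫| ≤ δ) :
    |⟪g, Ghat d n g s β ω⟫| ≤ β * δ := by
  have hn0 : (0 : ℝ) < n := by exact_mod_cast hn
  rw [inner_G, abs_mul, abs_of_pos (by positivity), one_div, inv_mul_le_iff₀ hn0]
  refine (Finset.abs_sum_le_sum_abs _ _).trans ?_
  have : ∑ i : Fin n, β * δ = n * (β * δ) := by simp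
  rw [← this]
  refine Finset.sum_le_sum fun i _ => ?_
  rw [abs_mul]
  have b0 : 0 ≤ β := by have := hβ.1; linarith
  exact mul_le_mul (phi_abs d g s β hβ (ω i)) (h i) (abs_nonneg _) b0

lemma G_TT (d n : ℕ) (g : EuclideanSpace ℝ (Fin d)) (hg : ‖g‖ = 1) (s β : ℝ)
    (ω : Fin n → sphere (0 : EuclideanSpace ℝ (Fin d)) 1) :
    ‖Ghat d n g s β ω‖ ^ 2 - ⟪g, Ghat d n g s β ω⟫ ^ 2 =
    ‖Ghat d n g s β (fun i => TT d g s (ω i))‖ ^ 2 -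
      ⟪g, Ghat d n g s β (fun i => TT d g s (ω i))⟫ ^ 2 := by
  choose c hc _ using fun i => TT_coe d g hg s (ω i)
  have : Ghat d n g s β (fun i => TT d g s (ω i)) = Ghat d n g s β ω -
      (1 / (n : ℝ) * ∑ i, phiHat d g s β (ω i) * c i) • g := by
    unfold Ghat
    simp only [phi_TT d g hg, hc, smul_sub, Finset.sum_sub_distrib, mul_smul, Finset.sum_smul]
  rw [this, norm_sub_sq_real, inner_sub_right, inner_smul_right, inner_smul_right, norm_smul, hg,
    real_inner_self_eq_norm_sq, hg, real_inner_comm g, mul_one, Real.norm_eq_abs, sq_abs]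
  ring

lemma G_TT_nonneg (d n : ℕ) (g : EuclideanSpace ℝ (Fin d)) (hg : ‖g‖ = 1) (s β : ℝ) (hs : 0 ≤ s)
    (hβ : β ∈ Set.Ioo (1/2 : ℝ) 1)
    (ω : Fin n → sphere (0 : EuclideanSpace ℝ (Fin d)) 1) :
    0 ≤ ⟪g, Ghat d n g s β ω⟫ + ⟪g, Ghat d n g s β (fun i => TT d g s (ω i))⟫ := by
  rw [inner_G, inner_G, ← mul_add, ← Finset.sum_add_distrib]
  apply mul_nonneg (by positivity)
  refine Finset.sum_nonneg fun i _ => ?_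
  rw [phi_TT d g hg, ← mul_add]
  exact TT_nonneg d g hg s β hs (by have := hβ.1; linarith) hβ.2.le _

lemma core (d n : ℕ) (hd : 2 ≤ d) (hn : 1 ≤ n) (g : EuclideanSpace ℝ (Fin d)) (hg : ‖g‖ = 1)
    (s β : ℝ) (hs : 0 ≤ s) (hβ : β ∈ Set.Ioo (1/2 : ℝ) 1) (l m : ℝ) (hl : 0 < l) (hm : 0 < m)
    (B : Set (Fin n → sphere (0 : EuclideanSpace ℝ (Fin d)) 1)) (hB : MeasurableSet B)
    (hup : ∀ ω ∉ B, ⟪g, Ghat d n g s β ω⟫ / ‖Ghat d n g s β ω‖ +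
      ⟪g, Ghat d n g s β (fun i => TT d g s (ω i))⟫ / ‖Ghat d n g s β (fun i => TT d g s (ω i))‖ ≤
      (⟪g, Ghat d n g s β ω⟫ + ⟪g, Ghat d n g s β (fun i => TT d g s (ω i))⟫) / l)
    (hlo : ∀ ω ∉ B, (⟪g, Ghat d n g s β ω⟫ + ⟪g, Ghat d n g s β (fun i => TT d g s (ω i))⟫) / m ≤
      ⟪g, Ghat d n g s β ω⟫ / ‖Ghat d n g s β ω‖ +
      ⟪g, Ghat d n g s β (fun i => TT d g s (ω i))⟫ / ‖Ghat d n g s β (fun i => TT d g s (ω i))‖) :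
    (∫ ω : Fin n → (sphere (0 : EuclideanSpace ℝ (Fin d)) 1),
              (⟪g, Ghat d n g s β ω⟫ / ‖Ghat d n g s β ω‖)
              ∂(Measure.pi (fun _ : Fin n => sphereUniform d))) ≤
      (∫ u, phiHat d g s β u * ⟪g, (u : EuclideanSpace ℝ (Fin d))⟫ ∂(sphereUniform d)) / l +
        (Measure.pi (fun _ : Fin n => sphereUniform d)).real B ∧
    (∫ u, phiHat d g s β u * ⟪g, (u : EuclideanSpace ℝ (Fin d))⟫ ∂(sphereUniform d)) / m -
        (1 + β / m) * (Measure.pi (fun _ : Fin n => sphereUniform d)).real B ≤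
      (∫ ω : Fin n → (sphere (0 : EuclideanSpace ℝ (Fin d)) 1),
              (⟪g, Ghat d n g s β ω⟫ / ‖Ghat d n g s β ω‖)
              ∂(Measure.pi (fun _ : Fin n => sphereUniform d))) := by
  have := prob_sphere d hd
  have hpm := phi_meas d g s β
  have hn0 : (0 : ℝ) < n := by exact_mod_cast hn
  have b0 : 0 ≤ β := by have := hβ.1; linarith
  set P := Measure.pi (fun _ : Fin n => sphereUniform d) with hP
  set T : (Fin n → sphere (0 : EuclideanSpace ℝ (Fin d)) 1) → _ :=
    fun ω i => TT d g s (ω i) with hT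
  have hTm : MeasurePreserving T P P := measurePreserving_pi _ _ (fun _ => TT_mp d g hg s)
  set h : (Fin n → sphere (0 : EuclideanSpace ℝ (Fin d)) 1) → ℝ :=
    fun ω => ⟪g, Ghat d n g s β ω⟫ with hh
  set f : (Fin n → sphere (0 : EuclideanSpace ℝ (Fin d)) 1) → ℝ :=
    fun ω => ⟪g, Ghat d n g s β ω⟫ / ‖Ghat d n g s β ω‖ with hf
  have hGm : Measurable (Ghat d n g s β) := by
    unfold Ghat
    fun_prop
  have hhm : Measurable h := by fun_prop
  have hfm : Measurable f := by fun_prop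
  have hfb : ∀ ω, |f ω| ≤ 1 := fun ω => by
    have h1 := abs_real_inner_div_norm_mul_norm_le_one g (Ghat d n g s β ω)
    rw [hg, one_mul] at h1
    exact h1
  have hhb : ∀ ω, |h ω| ≤ β := fun ω => by
    have := inner_G_abs d n hn g s β hβ 1 ω (fun i => by
      have := abs_real_inner_le_norm g (ω i : EuclideanSpace ℝ (Fin d))
      simpa [hg] using this)
    simpa using this
  have hfi : Integrable f P := Integrable.of_bound hfm.aestronglyMeasurable 1
    (Filter.Eventually.of_forall hfb)
  have hhi : Integrable h P := Integrable.of_bound hhm.aestronglyMeasurable β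
    (Filter.Eventually.of_forall hhb)
  have hfTi : Integrable (fun ω => f (T ω)) P := hTm.integrable_comp_of_integrable hfi
  have hhTi : Integrable (fun ω => h (T ω)) P := hTm.integrable_comp_of_integrable hhi
  have efT : ∫ ω, f (T ω) ∂P = ∫ ω, f ω ∂P := by
    conv_rhs => rw [← hTm.map_eq]
    rw [integral_map hTm.measurable.aemeasurable hfm.aestronglyMeasurable]
  have ehT : ∫ ω, h (T ω) ∂P = ∫ ω, h ω ∂P := by
    conv_rhs => rw [← hTm.map_eq]
    rw [integral_map hTm.measurable.aemeasurable hhm.aestronglyMeasurable]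
  set A := ∫ u, phiHat d g s β u * ⟪g, (u : EuclideanSpace ℝ (Fin d))⟫ ∂(sphereUniform d) with hA
  have ehA : ∫ ω, h ω ∂P = A := by
    simp only [hh, inner_G]
    rw [integral_const_mul, integral_finsetSum]
    · have : ∀ i : Fin n, ∫ ω, phiHat d g s β (ω i) * ⟪g, (ω i : EuclideanSpace ℝ (Fin d))⟫ ∂P = A := by
        intro i
        rw [hP, integral_comp_eval (ι := Fin n) (μ := fun _ : Fin n => sphereUniform d) (i := i) (f := fun u : sphere (0 : EuclideanSpace ℝ (Fin d)) 1 => phiHat d g s β u * ⟪g, (u : EuclideanSpace ℝ (Fin d))⟫)]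
        exact (by fun_prop : Measurable _).aestronglyMeasurable
      simp only [this, Finset.sum_const, Finset.card_univ, Fintype.card_fin, nsmul_eq_mul]
      field_simp
    · intro i _
      refine Integrable.of_bound (by fun_prop : Measurable _).aestronglyMeasurable β
        (Filter.Eventually.of_forall fun ω => ?_)
      rw [Real.norm_eq_abs, abs_mul]
      have h1 := abs_real_inner_le_norm g (ω i : EuclideanSpace ℝ (Fin d))
      have h2 := phi_abs d g s β hβ (ω i)
      have h3 : |⟪g, (ω i : EuclideanSpace ℝ (Fin d))⟫| ≤ 1 := by simpa [hg] using h1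
      calc _ ≤ β * 1 := mul_le_mul h2 h3 (abs_nonneg _) b0
        _ = β := mul_one _
  have hnn : ∀ ω, 0 ≤ h ω + h (T ω) := fun ω => G_TT_nonneg d n g hg s β hs hβ ω
  have hIi : Integrable (B.indicator (fun _ => (1 : ℝ))) P :=
    (integrable_const 1).indicator hB
  have hIe : ∫ ω, B.indicator (fun _ => (1 : ℝ)) ω ∂P = P.real B := by
    rw [integral_indicator hB]; simp
  have hsi : Integrable (fun ω => h ω + h (T ω)) P := hhi.add hhTi
  have hsfi : Integrable (fun ω => f ω + f (T ω)) P := hfi.add hfTi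
  have hdl : Integrable (fun ω => (h ω + h (T ω)) / l) P := hsi.div_const l
  have hdm : Integrable (fun ω => (h ω + h (T ω)) / m) P := hsi.div_const m
  have hI2 : Integrable (fun ω => 2 * B.indicator (fun _ => (1 : ℝ)) ω) P := hIi.const_mul 2
  have hI3 : Integrable (fun ω => 2 * (1 + β / m) * B.indicator (fun _ => (1 : ℝ)) ω) P :=
    hIi.const_mul _
  have i1 : Integrable (fun ω => (h ω + h (T ω)) / l + 2 * B.indicator (fun _ => (1 : ℝ)) ω) P :=
    hdl.add hI2
  have i2 : Integrable (fun ω => (h ω + h (T ω)) / m -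
    2 * (1 + β / m) * B.indicator (fun _ => (1 : ℝ)) ω) P := hdm.sub hI3
  constructor
  · have key : ∫ ω, (f ω + f (T ω)) ∂P ≤
        ∫ ω, ((h ω + h (T ω)) / l + 2 * B.indicator (fun _ => (1 : ℝ)) ω) ∂P := by
      apply integral_mono hsfi i1
      intro ω
      by_cases hω : ω ∈ B
      · simp only [indicator_of_mem hω]
        have := div_nonneg (hnn ω) hl.le
        have := (abs_le.1 (hfb ω)).2
        have := (abs_le.1 (hfb (T ω))).2
        linarith
      · simp only [indicator_of_notMem hω, mul_zero, add_zero]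
        exact hup ω hω
    rw [integral_add hfi hfTi, integral_add hdl hI2,
      integral_div, integral_add hhi hhTi, integral_const_mul, hIe, efT, ehT, ehA, add_div] at key
    linarith
  · have key : ∫ ω, ((h ω + h (T ω)) / m - 2 * (1 + β / m) * B.indicator (fun _ => (1 : ℝ)) ω) ∂P
        ≤ ∫ ω, (f ω + f (T ω)) ∂P := by
      apply integral_mono i2 hsfi
      intro ω
      by_cases hω : ω ∈ B
      · simp only [indicator_of_mem hω]
        have h1 : (h ω + h (T ω)) / m ≤ (β + β) / m := by
          have := (abs_le.1 (hhb ω)).2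
          have := (abs_le.1 (hhb (T ω))).2
          gcongr
        have := (abs_le.1 (hfb ω)).1
        have := (abs_le.1 (hfb (T ω))).1
        rw [add_div β] at h1
        linarith
      · simp only [indicator_of_notMem hω, mul_zero, sub_zero]
        exact hlo ω hω
    rw [integral_add hfi hfTi, integral_sub hdm hI3,
      integral_div, integral_add hhi hhTi, integral_const_mul, hIe, efT, ehT, ehA, add_div] at key
    linarith

lemma bad_bound (d n : ℕ) (hd : 2 ≤ d) (hn : 1 ≤ n) (g : EuclideanSpace ℝ (Fin d)) (hg : ‖g‖ = 1)
    (ε : ℝ) (h0 : 0 < ε) (h1 : ε ≤ 1) :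
    ∃ B : Set (Fin n → sphere (0 : EuclideanSpace ℝ (Fin d)) 1), MeasurableSet B ∧
      (Measure.pi (fun _ : Fin n => sphereUniform d)).real B ≤
        n * (n + 1) * Real.exp (-(1 / 128 * d * ε ^ 2)) ∧
      ∀ ω ∉ B, (∀ i, |⟪g, (ω i : EuclideanSpace ℝ (Fin d))⟫| ≤ Real.sqrt (ε / 24)) ∧
        ∀ i j, i ≠ j →
        |⟪(ω i : EuclideanSpace ℝ (Fin d)), (ω j : EuclideanSpace ℝ (Fin d))⟫| ≤ ε / 4 := by
  have := prob_sphere d hd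
  set P := Measure.pi (fun _ : Fin n => sphereUniform d) with hP
  set E : Fin n → Fin n → Set (Fin n → sphere (0 : EuclideanSpace ℝ (Fin d)) 1) := fun i j =>
    if i = j then {ω | Real.sqrt (ε / 24) ≤ |⟪g, (ω i : EuclideanSpace ℝ (Fin d))⟫|}
    else {ω | ε / 4 ≤ |⟪(ω i : EuclideanSpace ℝ (Fin d)), (ω j : EuclideanSpace ℝ (Fin d))⟫|} with hE
  have hsq : 0 < Real.sqrt (ε / 24) := by positivity
  have hEm : ∀ i j, MeasurableSet (E i j) := by
    intro i j
    simp only [hE]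
    split_ifs
    · apply measurableSet_le
      · fun_prop
      · apply Continuous.measurable; fun_prop
    · apply measurableSet_le
      · fun_prop
      · apply Continuous.measurable; fun_prop
  have hdd : (0 : ℝ) ≤ d := by positivity
  have hEb : ∀ i j, P.real (E i j) ≤ 2 * Real.exp (-(1 / 64 * d * ε ^ 2)) := by
    intro i j
    apply ENNReal.toReal_le_of_le_ofReal (by positivity)
    simp only [hE]
    split_ifs with h
    · refine (eval_bound d n hd i g hg _ hsq).trans ?_
      rw [Real.sq_sqrt (by positivity)]
      apply ENNReal.ofReal_le_ofReal
      gcongr 2 * Real.exp (-?_)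
      nlinarith [mul_nonneg hdd (mul_nonneg h0.le (sub_nonneg.2 h1))]
    · refine (pair_bound d n hd i j h _ (by positivity)).trans ?_
      apply ENNReal.ofReal_le_ofReal
      gcongr 2 * Real.exp (-?_)
      nlinarith [mul_nonneg hdd (sq_nonneg ε)]
  refine ⟨⋃ i, ⋃ j, E i j, MeasurableSet.iUnion fun i => MeasurableSet.iUnion fun j => hEm i j,
    ?_, ?_⟩
  · set x := Real.exp (-(1 / 128 * d * ε ^ 2)) with hx
    have hx0 : 0 < x := Real.exp_pos _
    have hx2 : Real.exp (-(1 / 64 * d * ε ^ 2)) = x ^ 2 := by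
      rw [hx, ← Real.exp_nat_mul]; congr 1; push_cast; ring
    rw [hx2] at hEb
    have hn1 : (1 : ℝ) ≤ n := by exact_mod_cast hn
    rcases le_total x (1 / 2) with hle | hle
    · have hb : P.real (⋃ i, ⋃ j, E i j) ≤ n * (n * (2 * x ^ 2)) := by
        refine (measureReal_iUnion_fintype_le _).trans ?_
        calc _ ≤ ∑ i : Fin n, (n : ℝ) * (2 * x ^ 2) := by
              refine Finset.sum_le_sum fun i _ => ?_
              refine (measureReal_iUnion_fintype_le _).trans ?_
              calc _ ≤ ∑ j : Fin n, (2 * x ^ 2) := Finset.sum_le_sum fun j _ => hEb i j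
                _ = _ := by simp
          _ = _ := by simp
      refine hb.trans ?_
      calc (n : ℝ) * (n * (2 * x ^ 2)) = n * (n * (2 * x * x)) := by ring
        _ ≤ n * ((n + 1) * (1 * x)) := by gcongr <;> linarith
        _ = _ := by ring
    · refine measureReal_le_one.trans ?_
      calc (1 : ℝ) = 1 * (1 + 1) * (1 / 2) := by norm_num
        _ ≤ _ := by gcongr
  · intro ω hω
    simp only [mem_iUnion, not_exists] at hω
    constructor
    · intro i
      have := hω i i
      simp only [hE, if_true, mem_ofPred_eq, not_le] at this
      exact this.le
    · intro i j hij
      have := hω i j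
      simp only [hE, if_neg hij, mem_ofPred_eq, not_le] at this
      exact this.le

set_option maxHeartbeats 2000000 in
/-- **Lemma 6: two-sided bound on the expected cosine similarity of the AGREST
estimator.** With `μ = E[⟨g,Ĝ⟩/‖Ĝ‖]`, `A = E[φ̂(u₁)⟨g,u₁⟩]`, `V = E[φ̂(u₁)²]`,
and `K = n(n+1)·exp(−Cdε₁²) + 2·exp(−2nε₂²/(2β−1)²)`, if
`V − ε₂ − (n−1)β²ε₁ > 0`, then
`μ ≤ √n·A/√(V−ε₂−(n−1)β²ε₁) + (1 + √n·β/√(V−ε₂−(n−1)β²ε₁))·K` and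
`μ ≥ √n·A/√(V+ε₂+(n−1)β²ε₁) − (1 + √n·β/√(V+ε₂+(n−1)β²ε₁))·K`. -/
theorem agrest_expected_cosine_bounds :
    ∃ C : ℝ, 0 < C ∧ ∀ d n : ℕ, 2 ≤ d → 1 ≤ n →
      ∀ g : EuclideanSpace ℝ (Fin d), ‖g‖ = 1 →
      ∀ s ∈ Set.Icc (0 : ℝ) 1, ∀ β ∈ Set.Ioo (1/2 : ℝ) 1,
      ∀ ε₁ : ℝ, 0 < ε₁ → ∀ ε₂ : ℝ, 0 < ε₂ →
      ∀ μ A V K : ℝ,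
        μ = (∫ ω : Fin n → (sphere (0 : EuclideanSpace ℝ (Fin d)) 1),
              (⟪g, Ghat d n g s β ω⟫ / ‖Ghat d n g s β ω‖)
              ∂(Measure.pi (fun _ : Fin n => sphereUniform d))) →
        A = (∫ u, phiHat d g s β u * ⟪g, (u : EuclideanSpace ℝ (Fin d))⟫
              ∂(sphereUniform d)) →
        V = (∫ u, (phiHat d g s β u) ^ 2 ∂(sphereUniform d)) →
        K = n * (n + 1) * Real.exp (-(C * d * ε₁ ^ 2))
              + 2 * Real.exp (-2 * n * ε₂ ^ 2 / (2 * β - 1) ^ 2) →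
        0 < V - ε₂ - ((n : ℝ) - 1) * β ^ 2 * ε₁ →
        (μ ≤ Real.sqrt n * A / Real.sqrt (V - ε₂ - ((n : ℝ) - 1) * β ^ 2 * ε₁)
              + (1 + Real.sqrt n * β / Real.sqrt (V - ε₂ - ((n : ℝ) - 1) * β ^ 2 * ε₁)) * K) ∧
        (Real.sqrt n * A / Real.sqrt (V + ε₂ + ((n : ℝ) - 1) * β ^ 2 * ε₁)
              - (1 + Real.sqrt n * β / Real.sqrt (V + ε₂ + ((n : ℝ) - 1) * β ^ 2 * ε₁)) * K ≤ μ) := by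
  refine ⟨1 / 128, by norm_num, ?_⟩
  intro d n hd hn g hg s hs β hβ ε₁ hε₁ ε₂ hε₂ μ A V K hμ hA hV hK hL
  have := prob_sphere d hd
  set P := Measure.pi (fun _ : Fin n => sphereUniform d) with hP
  have hn1 : (1 : ℝ) ≤ n := by exact_mod_cast hn
  have hn0 : (0 : ℝ) < n := by linarith
  have b0 : 0 < β := by have := hβ.1; linarith
  set L := V - ε₂ - ((n : ℝ) - 1) * β ^ 2 * ε₁ with hLd
  set U := V + ε₂ + ((n : ℝ) - 1) * β ^ 2 * ε₁ with hUd
  have hq : 0 ≤ ((n : ℝ) - 1) * β ^ 2 * ε₁ :=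
    mul_nonneg (mul_nonneg (by linarith) (sq_nonneg _)) hε₁.le
  have hU : 0 < U := by linarith
  set l := Real.sqrt (L / n) with hl
  set m := Real.sqrt (U / n) with hm
  have hl0 : 0 < l := by positivity
  have hm0 : 0 < m := by positivity
  have hl2 : n * l ^ 2 = L := by rw [hl, Real.sq_sqrt (by positivity)]; field_simp
  have hm2 : n * m ^ 2 = U := by rw [hm, Real.sq_sqrt (by positivity)]; field_simp
  suffices H : ∃ B : Set (Fin n → sphere (0 : EuclideanSpace ℝ (Fin d)) 1), MeasurableSet B ∧
      P.real B ≤ K ∧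
      (∀ ω ∉ B, ⟪g, Ghat d n g s β ω⟫ / ‖Ghat d n g s β ω‖ +
      ⟪g, Ghat d n g s β (fun i => TT d g s (ω i))⟫ / ‖Ghat d n g s β (fun i => TT d g s (ω i))‖ ≤
      (⟪g, Ghat d n g s β ω⟫ + ⟪g, Ghat d n g s β (fun i => TT d g s (ω i))⟫) / l) ∧
      (∀ ω ∉ B, (⟪g, Ghat d n g s β ω⟫ + ⟪g, Ghat d n g s β (fun i => TT d g s (ω i))⟫) / m ≤
      ⟪g, Ghat d n g s β ω⟫ / ‖Ghat d n g s β ω‖ +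
      ⟪g, Ghat d n g s β (fun i => TT d g s (ω i))⟫ / ‖Ghat d n g s β (fun i => TT d g s (ω i))‖) by
    obtain ⟨B, hB, hBK, hup, hlo⟩ := H
    obtain ⟨c1, c2⟩ := core d n hd hn g hg s β hs.1 hβ l m hl0 hm0 B hB hup hlo
    rw [← hμ, ← hA, ← hP] at c1 c2
    have hK0 : 0 ≤ K := measureReal_nonneg.trans hBK
    have el : ∀ a : ℝ, Real.sqrt n * a / Real.sqrt L = a / l := by
      intro a
      rw [hl, Real.sqrt_div hL.le]; field_simp
    have em : ∀ a : ℝ, Real.sqrt n * a / Real.sqrt U = a / m := by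
      intro a
      rw [hm, Real.sqrt_div hU.le]; field_simp
    rw [el, el, em, em]
    have p1 : 0 ≤ β / l := by positivity
    have p2 : 0 ≤ β / m := by positivity
    constructor
    · nlinarith [mul_nonneg p1 hK0]
    · nlinarith [mul_le_mul_of_nonneg_left hBK (by linarith : 0 ≤ 1 + β / m)]
  -- the Hoeffding event
  set B1 : Set (Fin n → sphere (0 : EuclideanSpace ℝ (Fin d)) 1) :=
    {ω | ε₂ ≤ |1 / (n : ℝ) * ∑ i, phiHat d g s β (ω i) ^ 2 - V|} with hB1
  have hpm := phi_meas d g s β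
  have hB1m : MeasurableSet B1 := by
    apply measurableSet_le <;> fun_prop
  have hB1p : P.real B1 ≤ 2 * Real.exp (-2 * n * ε₂ ^ 2 / (2 * β - 1) ^ 2) := by
    have := hoeff d n hd hn g s β hβ ε₂ hε₂
    rw [← hV] at this
    exact this
  -- norm control
  have hnorm : ∀ ω ∉ B1, ∀ η : ℝ, 0 ≤ η → (∀ i j, i ≠ j →
      |⟪(ω i : EuclideanSpace ℝ (Fin d)), (ω j : EuclideanSpace ℝ (Fin d))⟫| ≤ η) →
      V - ε₂ - ((n : ℝ) - 1) * β ^ 2 * η ≤ n * ‖Ghat d n g s β ω‖ ^ 2 ∧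
      n * ‖Ghat d n g s β ω‖ ^ 2 ≤ V + ε₂ + ((n : ℝ) - 1) * β ^ 2 * η := by
    intro ω hω η hη hoff
    have h1 := abs_le.1 (norm_bound d n hn g s β hβ η hη ω hoff)
    simp only [hB1, mem_ofPred_eq, not_le] at hω
    have h2 := abs_lt.1 hω
    constructor <;> linarith [h1.1, h1.2, h2.1, h2.2]
  have hB1T : ∀ ω ∉ B1, (fun i => TT d g s (ω i)) ∉ B1 := by
    intro ω hω
    simp only [hB1, mem_ofPred_eq, phi_TT d g hg] at hω ⊢
    exact hω
  have hlle : ∀ H : ℝ, 0 ≤ H → L ≤ n * H ^ 2 → l ≤ H := by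
    intro H hH h
    apply le_of_sq_le_sq _ hH
    rw [← hl2] at h
    exact le_of_mul_le_mul_left h hn0
  have hmle : ∀ H : ℝ, 0 ≤ H → n * H ^ 2 ≤ U → H ≤ m := by
    intro H hH h
    apply le_of_sq_le_sq _ hm0.le
    rw [← hm2] at h
    exact le_of_mul_le_mul_left h hn0
  rcases hn.eq_or_lt with h1 | h1
  · have hsub : Subsingleton (Fin n) := by rw [← h1]; infer_instance
    have hone : (n : ℝ) - 1 = 0 := by rw [← h1]; norm_num
    have hHH : ∀ ω ∉ B1, ‖Ghat d n g s β ω‖ = ‖Ghat d n g s β (fun i => TT d g s (ω i))‖ := by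
      intro ω hω
      have e1 := norm_bound d n hn g s β hβ 0 le_rfl ω (fun i j hij =>
        absurd (Subsingleton.elim i j) hij)
      have e2 := norm_bound d n hn g s β hβ 0 le_rfl (fun i => TT d g s (ω i)) (fun i j hij =>
        absurd (Subsingleton.elim i j) hij)
      simp only [phi_TT d g hg] at e2
      rw [mul_zero] at e1 e2
      have e1' := abs_nonpos_iff.1 e1
      have e2' := abs_nonpos_iff.1 e2
      have : (n : ℝ) * ‖Ghat d n g s β ω‖ ^ 2 =
        n * ‖Ghat d n g s β (fun i => TT d g s (ω i))‖ ^ 2 := by linarith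
      have := mul_left_cancel₀ hn0.ne' this
      exact (sq_eq_sq₀ (norm_nonneg _) (norm_nonneg _)).1 this
    have hlm : ∀ ω ∉ B1, l ≤ ‖Ghat d n g s β ω‖ ∧ ‖Ghat d n g s β ω‖ ≤ m := by
      intro ω hω
      have := hnorm ω hω 0 le_rfl (fun i j hij => absurd (Subsingleton.elim i j) hij)
      constructor
      · apply hlle _ (norm_nonneg _); linarith [this.1]
      · apply hmle _ (norm_nonneg _); linarith [this.2]
    refine ⟨B1, hB1m, ?_, ?_, ?_⟩
    · rw [hK]
      refine hB1p.trans ?_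
      have : 0 ≤ (n : ℝ) * (n + 1) * Real.exp (-(1 / 128 * d * ε₁ ^ 2)) := by positivity
      linarith
    · intro ω hω
      have := G_TT_nonneg d n g hg s β hs.1 hβ ω
      have h2 := (hlm ω hω).1
      rw [← hHH ω hω, ← add_div]
      gcongr
    · intro ω hω
      have := G_TT_nonneg d n g hg s β hs.1 hβ ω
      have h2 := hlm ω hω
      have h3 : 0 < ‖Ghat d n g s β ω‖ := by linarith [h2.1]
      have h4 := h2.2
      rw [← hHH ω hω, ← add_div]
      gcongr
  · have hn2 : (2 : ℝ) ≤ n := by exact_mod_cast h1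
    have hVb : V ≤ β ^ 2 := by
      rw [hV]
      have hi : Integrable (fun u => phiHat d g s β u ^ 2) (sphereUniform d) := by
        refine Integrable.of_mem_Icc ((1 - β) ^ 2) (β ^ 2) (hpm.pow_const 2).aemeasurable ?_
        exact Filter.Eventually.of_forall fun u => phi_sq d g s β hβ u
      calc _ ≤ ∫ u, β ^ 2 ∂(sphereUniform d) :=
            integral_mono hi (integrable_const _) fun u => (phi_sq d g s β hβ u).2
        _ = _ := by simp
    have hb2 : 0 < β ^ 2 := by positivity
    have hε1 : ε₁ ≤ 1 := by
      by_contra hc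
      push Not at hc
      have : β ^ 2 * 1 ≤ β ^ 2 * ε₁ := by gcongr
      have h3 : 0 ≤ ((n : ℝ) - 2) * (β ^ 2 * ε₁) := mul_nonneg (by linarith) (by positivity)
      nlinarith
    obtain ⟨B2, hB2m, hB2p, hB2⟩ := bad_bound d n hd hn g hg ε₁ hε₁ hε1
    have hdata : ∀ ω ∉ B1, (∀ i, |⟪g, (ω i : EuclideanSpace ℝ (Fin d))⟫| ≤ Real.sqrt (ε₁ / 24)) →
        (∀ i j, i ≠ j →
        |⟪(ω i : EuclideanSpace ℝ (Fin d)), (ω j : EuclideanSpace ℝ (Fin d))⟫| ≤ ε₁ / 2) →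
        l ≤ ‖Ghat d n g s β ω‖ ∧
        ‖Ghat d n g s β ω‖ ^ 2 + 6 * ⟪g, Ghat d n g s β ω⟫ ^ 2 ≤ m ^ 2 ∧
        2 * ⟪g, Ghat d n g s β ω⟫ ^ 2 ≤ ‖Ghat d n g s β ω‖ ^ 2 := by
      intro ω hω hx hoff
      obtain ⟨q1, q2⟩ := hnorm ω hω (ε₁ / 2) (by positivity) hoff
      have q3 := inner_G_abs d n hn g s β hβ _ ω hx
      have q4 : ⟪g, Ghat d n g s β ω⟫ ^ 2 ≤ β ^ 2 * ε₁ / 24 := by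
        rw [← sq_abs]
        calc _ ≤ (β * Real.sqrt (ε₁ / 24)) ^ 2 := by gcongr
          _ = _ := by rw [mul_pow, Real.sq_sqrt (by positivity)]; ring
      have q5 : n * ⟪g, Ghat d n g s β ω⟫ ^ 2 ≤ n * (β ^ 2 * ε₁ / 24) := by gcongr
      have q6 : 0 ≤ ((n : ℝ) - 2) * (β ^ 2 * ε₁) := mul_nonneg (by linarith) (by positivity)
      have q7 : 0 < β ^ 2 * ε₁ := by positivity
      refine ⟨?_, ?_, ?_⟩
      · apply hlle _ (norm_nonneg _); nlinarith
      · apply le_of_mul_le_mul_left _ hn0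
        rw [hm2, hUd]
        nlinarith
      · apply le_of_mul_le_mul_left _ hn0
        nlinarith
    have hboth : ∀ ω ∉ B1 ∪ B2, ∀ ω', (ω' = ω ∨ ω' = fun i => TT d g s (ω i)) →
        l ≤ ‖Ghat d n g s β ω'‖ ∧
        ‖Ghat d n g s β ω'‖ ^ 2 + 6 * ⟪g, Ghat d n g s β ω'⟫ ^ 2 ≤ m ^ 2 ∧
        2 * ⟪g, Ghat d n g s β ω'⟫ ^ 2 ≤ ‖Ghat d n g s β ω'‖ ^ 2 := by
      intro ω hω ω' h
      simp only [mem_union, not_or] at hω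
      obtain ⟨hω1, hω2⟩ := hω
      obtain ⟨hx, hoff⟩ := hB2 ω hω2
      rcases h with rfl | rfl
      · refine hdata _ hω1 hx fun i j hij => (hoff i j hij).trans (by linarith)
      · refine hdata _ (hB1T ω hω1) (fun i => ?_) fun i j hij => ?_
        · obtain ⟨c, _, hc⟩ := TT_coe d g hg s (ω i)
          rw [hc]; exact hx i
        · refine (TT_inner_le d g hg s (ω i) (ω j)).trans ?_
          have r1 := hoff i j hij
          have r2 : |⟪g, (ω i : EuclideanSpace ℝ (Fin d))⟫| * |⟪g, (ω j : EuclideanSpace ℝ (Fin d))⟫|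
              ≤ Real.sqrt (ε₁ / 24) * Real.sqrt (ε₁ / 24) :=
            mul_le_mul (hx i) (hx j) (abs_nonneg _) (Real.sqrt_nonneg _)
          rw [Real.mul_self_sqrt (by positivity)] at r2
          linarith
    refine ⟨B1 ∪ B2, hB1m.union hB2m, ?_, ?_, ?_⟩
    · rw [hK]
      refine (measureReal_union_le _ _).trans ?_
      linarith
    · intro ω hω
      exact cos_upper _ _ _ _ l hl0 (hboth ω hω _ (Or.inl rfl)).1 (hboth ω hω _ (Or.inr rfl)).1
        (G_TT d n g hg s β ω) (G_TT_nonneg d n g hg s β hs.1 hβ ω)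
    · intro ω hω
      obtain ⟨a1, a2, a3⟩ := hboth ω hω _ (Or.inl rfl)
      obtain ⟨c1, c2, c3⟩ := hboth ω hω _ (Or.inr rfl)
      exact cos_lower _ _ _ _ m hm0 (by linarith) (by linarith)
        (G_TT d n g hg s β ω) (G_TT_nonneg d n g hg s β hs.1 hβ ω) a2 c2 a3 c3
end

section
/- Fix q ∈ [1/2, 1). For each integer d ≥ 2, let g_d ∈ ℝ^d be a unit vector, let u_d be uniformly distributed on S^{d-1}, and let s_d ∈ [0,1) be the unique value with P[⟨g_d, u_d⟩ ≥ −s_d] = q. Then there exist constants 0 < a ≤ b and an integer D₀ such that for all d ≥ D₀: a·d^{−1/2} ≤ Γ(d/2)·(1 − s_d²)^{(d−1)/2} / (2√π·Γ((d+1)/2)) ≤ b·d^{−1/2}. -/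
open MeasureTheory Metric Set Real
open scoped RealInnerProductSpace

noncomputable def agI (d : ℕ) (v : EuclideanSpace ℝ (Fin d)) : ENNReal :=
  ∫⁻ x in ball (0 : EuclideanSpace ℝ (Fin d)) 1, ENNReal.ofReal (⟪v, x⟫ ^ 2 / ‖x‖ ^ 2)

lemma ag_meas (d : ℕ) (v : EuclideanSpace ℝ (Fin d)) :
    Measurable (fun x : EuclideanSpace ℝ (Fin d) => ENNReal.ofReal (⟪v, x⟫ ^ 2 / ‖x‖ ^ 2)) := by
  have h1 : Measurable (fun x : EuclideanSpace ℝ (Fin d) => ⟪v, x⟫) :=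
    (continuous_const.inner continuous_id).measurable
  exact ((h1.pow_const 2).div (measurable_norm.pow_const 2)).ennreal_ofReal

lemma agI_eq (d : ℕ) (v w : EuclideanSpace ℝ (Fin d)) (h : ‖v‖ = ‖w‖) : agI d v = agI d w := by
  set ρ := Submodule.reflection (ℝ ∙ (v - w))ᗮ with hρ
  have hv : ρ v = w := Submodule.reflection_sub h
  have mp := ρ.measurePreserving
  have hpre : ρ ⁻¹' (ball 0 1) = ball 0 1 := by
    ext x; simp
  have := mp.setLIntegral_comp_preimage (s := ball 0 1) measurableSet_ball (ag_meas d w)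
  rw [hpre] at this
  unfold agI
  rw [← this]
  congr 1
  ext x
  rw [← hv, ρ.inner_map_map, ρ.norm_map]

lemma agI_le (d : ℕ) (v : EuclideanSpace ℝ (Fin d)) (h : ‖v‖ = 1) :
    d * agI d v ≤ volume (ball (0 : EuclideanSpace ℝ (Fin d)) 1) := by
  have h1 : (d : ENNReal) * agI d v
      = ∑ i : Fin d, agI d (EuclideanSpace.basisFun (Fin d) ℝ i) := by
    rw [Finset.sum_congr rfl (fun i _ => agI_eq d _ v (by simp [h]))]
    simp
  rw [h1]
  unfold agI
  rw [← lintegral_finsetSum _ (fun i _ => ag_meas d _)]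
  calc _ ≤ ∫⁻ x in ball (0 : EuclideanSpace ℝ (Fin d)) 1, 1 := by
        apply lintegral_mono
        intro x
        simp only
        rw [← ENNReal.ofReal_sum_of_nonneg (fun i _ => by positivity), ← Finset.sum_div]
        rw [ENNReal.ofReal_le_one]
        have : ∑ i, ⟪EuclideanSpace.basisFun (Fin d) ℝ i, x⟫ ^ 2 = ‖x‖ ^ 2 :=
          (EuclideanSpace.basisFun (Fin d) ℝ).sum_sq_inner_right x
        rw [this]
        exact div_self_le_one _
    _ = _ := by simp

open scoped Pointwise in
lemma ag_cap (d : ℕ) (v : EuclideanSpace ℝ (Fin d)) (h : ‖v‖ = 1) (s : ℝ) (hs : 0 ≤ s) :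
    ENNReal.ofReal (d * s ^ 2) * (volume : Measure (EuclideanSpace ℝ (Fin d))).toSphere
      {u : (sphere (0 : EuclideanSpace ℝ (Fin d)) 1) |
          -s ≤ ⟪v, (u : EuclideanSpace ℝ (Fin d))⟫}ᶜ
      ≤ (volume : Measure (EuclideanSpace ℝ (Fin d))).toSphere univ := by
  have hm : MeasurableSet {u : (sphere (0 : EuclideanSpace ℝ (Fin d)) 1) |
          -s ≤ ⟪v, (u : EuclideanSpace ℝ (Fin d))⟫} :=
    (isClosed_le continuous_const (continuous_const.inner continuous_subtype_val)).measurableSet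
  rw [Measure.toSphere_apply' _ hm.compl, Measure.toSphere_apply_univ]
  simp only [finrank_euclideanSpace, Fintype.card_fin]
  have hsub : (Ioo (0 : ℝ) 1 • (Subtype.val '' {u : (sphere (0 : EuclideanSpace ℝ (Fin d)) 1) |
          -s ≤ ⟪v, (u : EuclideanSpace ℝ (Fin d))⟫}ᶜ) : Set (EuclideanSpace ℝ (Fin d)))
      ⊆ {x | ENNReal.ofReal (s ^ 2) ≤ ENNReal.ofReal (⟪v, x⟫ ^ 2 / ‖x‖ ^ 2)} ∩ ball 0 1 := by
    rintro _ ⟨r, hr, _, ⟨u, hu, rfl⟩, rfl⟩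
    have hu1 : ‖(u : EuclideanSpace ℝ (Fin d))‖ = 1 := by simp
    have hr0 : r ≠ 0 := hr.1.ne'
    simp only [mem_compl_iff, mem_setOf_eq, not_le] at hu
    constructor
    · simp only [mem_setOf_eq]
      apply ENNReal.ofReal_le_ofReal
      rw [norm_smul, hu1, inner_smul_right, mul_one, Real.norm_eq_abs, sq_abs, mul_pow,
        mul_div_cancel_left₀ _ (pow_ne_zero 2 hr0)]
      nlinarith
    · simp [norm_smul, abs_of_pos hr.1, hr.2]
  have hM := mul_meas_ge_le_lintegral (μ := volume.restrict (ball 0 1)) (ag_meas d v)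
    (ENNReal.ofReal (s ^ 2))
  rw [Measure.restrict_apply (measurableSet_le measurable_const (ag_meas d v))] at hM
  rw [ENNReal.ofReal_mul (by positivity), ENNReal.ofReal_natCast, mul_assoc,
    mul_left_comm (ENNReal.ofReal _)]
  gcongr
  calc _ ≤ (d : ENNReal) * agI d v := by
        gcongr
        exact le_trans (by gcongr) hM
    _ ≤ _ := agI_le d v h

lemma ag_s (d : ℕ) (hd : 2 ≤ d) (v : EuclideanSpace ℝ (Fin d)) (h : ‖v‖ = 1) (s q : ℝ)
    (hs : 0 ≤ s)
    (hcap : (sphereUniform d {u : (sphere (0 : EuclideanSpace ℝ (Fin d)) 1) |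
          -s ≤ ⟪v, (u : EuclideanSpace ℝ (Fin d))⟫}).toReal = q) :
    d * s ^ 2 * (1 - q) ≤ 1 := by
  have hm : MeasurableSet {u : (sphere (0 : EuclideanSpace ℝ (Fin d)) 1) |
          -s ≤ ⟪v, (u : EuclideanSpace ℝ (Fin d))⟫} :=
    (isClosed_le continuous_const (continuous_const.inner continuous_subtype_val)).measurableSet
  have hc := ag_cap d v h s hs
  set S := {u : (sphere (0 : EuclideanSpace ℝ (Fin d)) 1) |
          -s ≤ ⟪v, (u : EuclideanSpace ℝ (Fin d))⟫}
  set T := (volume : Measure (EuclideanSpace ℝ (Fin d))).toSphere with hT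
  have : Nontrivial (EuclideanSpace ℝ (Fin d)) := ⟨v, 0, by rintro rfl; simp at h⟩
  have hT0 : T univ ≠ 0 := by
    rw [Ne, Measure.measure_univ_eq_zero]; exact Measure.toSphere_ne_zero _
  have hTt : T univ ≠ ⊤ := measure_ne_top _ _
  have hU : ∀ A, sphereUniform d A = (T univ)⁻¹ * T A := fun A => rfl
  have : IsProbabilityMeasure (sphereUniform d) := ⟨by
    rw [hU]; exact ENNReal.inv_mul_cancel hT0 hTt⟩
  have h1 : (sphereUniform d Sᶜ).toReal = 1 - q := by
    rw [← hcap]; exact probReal_compl_eq_one_sub hm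
  have h2 : ENNReal.ofReal (d * s ^ 2) * sphereUniform d Sᶜ ≤ 1 := by
    rw [hU, mul_left_comm]
    calc _ ≤ (T univ)⁻¹ * T univ := by gcongr
      _ = 1 := ENNReal.inv_mul_cancel hT0 hTt
  have h3 := ENNReal.toReal_mono ENNReal.one_ne_top h2
  rw [ENNReal.toReal_mul, ENNReal.toReal_ofReal (by positivity), h1] at h3
  simpa using h3

lemma ag_Gamma_sq {x : ℝ} (hx : 0 < x) :
    Gamma (x + 1/2) ^ 2 ≤ x * Gamma x ^ 2 := by
  have h := Real.Gamma_mul_add_mul_le_rpow_Gamma_mul_rpow_Gamma hx (by linarith : 0 < x + 1)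
    (by norm_num : (0:ℝ) < 1/2) (by norm_num : (0:ℝ) < 1/2) (by norm_num)
  have hg := Gamma_pos_of_pos hx
  have hg2 := Gamma_pos_of_pos (by linarith : 0 < x + 1/2)
  rw [← Real.sqrt_eq_rpow, ← Real.sqrt_eq_rpow, ← Real.sqrt_mul hg.le,
    Real.Gamma_add_one hx.ne', (by ring : 1/2 * x + 1/2 * (x+1) = x + 1/2)] at h
  have := (Real.le_sqrt' hg2).1 h
  linarith

lemma ag_ratio (d : ℕ) (hd : 2 ≤ d) :
    1 ≤ Gamma ((d:ℝ)/2) / Gamma (((d:ℝ)+1)/2) * √d ∧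
    Gamma ((d:ℝ)/2) / Gamma (((d:ℝ)+1)/2) * √d ≤ 2 := by
  have hd' : (2:ℝ) ≤ d := by exact_mod_cast hd
  have hx : (0:ℝ) < d/2 := by linarith
  have e1 : ((d:ℝ)+1)/2 = d/2 + 1/2 := by ring
  have a1 := ag_Gamma_sq hx
  have a2 := ag_Gamma_sq (by linarith : (0:ℝ) < d/2 + 1/2)
  rw [(by ring : (d:ℝ)/2 + 1/2 + 1/2 = d/2 + 1), Real.Gamma_add_one hx.ne'] at a2
  rw [e1]
  have p1 := Gamma_pos_of_pos hx
  have p2 := Gamma_pos_of_pos (by linarith : (0:ℝ) < d/2 + 1/2)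
  set A := Gamma ((d:ℝ)/2)
  set B := Gamma ((d:ℝ)/2 + 1/2)
  have hs : √(d:ℝ) ^ 2 = d := Real.sq_sqrt (by linarith)
  have hs0 : 0 ≤ √(d:ℝ) := Real.sqrt_nonneg _
  rw [div_mul_eq_mul_div, le_div_iff₀ p2, div_le_iff₀ p2]
  constructor
  · apply le_of_sq_le_sq _ (by positivity)
    rw [mul_pow, mul_pow, hs]
    nlinarith [sq_nonneg A]
  · apply le_of_sq_le_sq _ (by positivity)
    rw [mul_pow, mul_pow, hs]
    have : (d:ℝ) * (A^2 * d) ≤ d * (2^2 * B^2) := by nlinarith [sq_nonneg B]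
    exact le_of_mul_le_mul_left this (by linarith)

lemma ag_pow (d : ℕ) (hd : 2 ≤ d) (t C : ℝ) (ht0 : 0 ≤ t) (ht : t * d ≤ C) (hC : 2 * C ≤ d) :
    Real.exp (-C) ≤ (1 - t) ^ (((d:ℝ) - 1)/2) ∧ (1 - t) ^ (((d:ℝ) - 1)/2) ≤ 1 := by
  have hd' : (2:ℝ) ≤ d := by exact_mod_cast hd
  have ht2 : t ≤ 1/2 := by
    by_contra hh
    push Not at hh
    nlinarith
  constructor
  · have h1 : Real.exp (-(2*t)) ≤ 1 - t := by
      have h2 : 2 * t + 1 ≤ Real.exp (2*t) := Real.add_one_le_exp _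
      rw [Real.exp_neg]
      apply inv_le_of_inv_le₀ (by linarith)
      refine le_trans ?_ h2
      rw [inv_le_iff_one_le_mul₀ (by linarith)]
      nlinarith
    calc Real.exp (-C) ≤ Real.exp (-(2*t) * (((d:ℝ) - 1)/2)) := by
          apply Real.exp_le_exp.2
          nlinarith
      _ = Real.exp (-(2*t)) ^ (((d:ℝ) - 1)/2) := by rw [Real.exp_mul]
      _ ≤ _ := Real.rpow_le_rpow (Real.exp_pos _).le h1 (by linarith)
  · exact Real.rpow_le_one (by linarith) (by linarith) (by linarith)

/-- **Lemma 7: `Θ(1/√d)` rate of the expected reweighted inner product.**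
Fix `q ∈ [1/2, 1)`. For each `d ≥ 2`, let `g d` be a unit vector in `ℝ^d` and
`s d ∈ [0,1)` the value with `P[⟨g d, u⟩ ≥ −s d] = q` for `u` uniform on
`S^{d-1}`. Then there are `0 < a ≤ b` and `D₀` such that for all `d ≥ D₀`,
`a·d^(−1/2) ≤ Γ(d/2)·(1−(s d)²)^((d−1)/2)/(2√π·Γ((d+1)/2)) ≤ b·d^(−1/2)`. -/
theorem agrest_expectation_rate
    (q : ℝ) (hq : q ∈ Set.Ico (1/2 : ℝ) 1)
    (g : ∀ d : ℕ, EuclideanSpace ℝ (Fin d)) (s : ℕ → ℝ)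
    (hg : ∀ d : ℕ, 2 ≤ d → ‖g d‖ = 1)
    (hs : ∀ d : ℕ, 2 ≤ d → s d ∈ Set.Ico (0 : ℝ) 1)
    (hcap : ∀ d : ℕ, 2 ≤ d →
      (sphereUniform d {u : (sphere (0 : EuclideanSpace ℝ (Fin d)) 1) |
          -(s d) ≤ ⟪g d, (u : EuclideanSpace ℝ (Fin d))⟫}).toReal = q) :
    ∃ a b : ℝ, 0 < a ∧ a ≤ b ∧ ∃ D₀ : ℕ, ∀ d : ℕ, D₀ ≤ d →
      a * (d : ℝ) ^ (-(1/2) : ℝ)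
        ≤ Real.Gamma ((d : ℝ) / 2) * (1 - s d ^ 2) ^ (((d : ℝ) - 1) / 2)
            / (2 * Real.sqrt π * Real.Gamma (((d : ℝ) + 1) / 2)) ∧
      Real.Gamma ((d : ℝ) / 2) * (1 - s d ^ 2) ^ (((d : ℝ) - 1) / 2)
            / (2 * Real.sqrt π * Real.Gamma (((d : ℝ) + 1) / 2))
        ≤ b * (d : ℝ) ^ (-(1/2) : ℝ) := by
  have hq1 : 0 < 1 - q := by linarith [hq.2]
  have hpi : 0 < √π := Real.sqrt_pos.2 Real.pi_pos
  refine ⟨Real.exp (-(1/(1-q))) / (2 * √π), 1 / √π, by positivity, ?_,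
    max 2 ⌈2 * (1/(1-q))⌉₊, ?_⟩
  · have : Real.exp (-(1/(1-q))) ≤ 1 := by
      apply Real.exp_le_one_iff.2
      have : 0 < 1/(1-q) := by positivity
      linarith
    rw [div_le_div_iff₀ (by positivity) hpi]
    nlinarith
  · intro d hd
    have hd2 : 2 ≤ d := le_trans (le_max_left _ _) hd
    have hdC : 2 * (1/(1-q)) ≤ d := Nat.ceil_le.1 (le_trans (le_max_right _ _) hd)
    have hsd := ag_s d hd2 (g d) (hg d hd2) (s d) q (hs d hd2).1 (hcap d hd2)
    obtain ⟨l1, l2⟩ := ag_pow d hd2 (s d ^ 2) (1/(1-q)) (sq_nonneg _)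
      (by rw [le_div_iff₀ hq1]; linarith) hdC
    obtain ⟨r1, r2⟩ := ag_ratio d hd2
    have hd0 : (0:ℝ) < d := by positivity
    have hsq : 0 < √(d:ℝ) := Real.sqrt_pos.2 hd0
    have hpow : (d : ℝ) ^ (-(1/2) : ℝ) = 1 / √d := by
      rw [Real.rpow_neg hd0.le, ← Real.sqrt_eq_rpow, one_div]
    rw [hpow]
    set P := (1 - s d ^ 2) ^ (((d : ℝ) - 1) / 2)
    have hP : 0 < P := lt_of_lt_of_le (Real.exp_pos _) l1
    have e : Real.Gamma ((d : ℝ) / 2) * P / (2 * Real.sqrt π * Real.Gamma (((d : ℝ) + 1) / 2))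
        = (Gamma ((d:ℝ)/2) / Gamma (((d:ℝ)+1)/2)) * P / (2 * √π) := by
      rw [mul_comm (2 * √π), ← div_div]
      ring
    rw [e]
    set R := Gamma ((d:ℝ)/2) / Gamma (((d:ℝ)+1)/2)
    constructor
    · rw [div_mul_eq_mul_div]
      apply div_le_div_of_nonneg_right _ (by positivity)
      rw [mul_one_div, div_le_iff₀ hsq]
      nlinarith
    · rw [div_mul_div_comm, div_le_div_iff₀ (by positivity) (by positivity)]
      have : R * √d * P ≤ 2 := by nlinarith
      nlinarith
end
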